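/- There exists an absolute constant c (depending only on sup_n m_n) such that for every martingale f ∈ H_{1/2}(G_m) one has ‖ sup_{n∈ℕ} |σ_n f| / log^2(n+1) ‖_{1/2} ≤ c ‖f‖_{H_{1/2}}, where σ_n f = (1/n)Σ_{k=1}^{n} S_k f is the n-th Fejér mean of the Vilenkin-Fourier series. -/

import Mathlib

open MeasureTheory Filter Finset Asymptotics
open scoped ENNReal NNReal

noncomputable section

namespace Vilenkin

/-- The Vilenkin group `G_m`: the complete direct product of the cyclic groups `Z_{m_n}`. -/
abbrev G (m : ℕ → ℕ) := ∀ n, ZMod (m n)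

/-- The generalized number system `M_0 = 1`, `M_{n+1} = m_n M_n`. -/
def MM (m : ℕ → ℕ) : ℕ → ℕ
  | 0 => 1
  | n + 1 => m n * MM m n

/-- The generalized Rademacher functions `r_k(x) = exp(2 π i x_k / m_k)`. -/
def rade (m : ℕ → ℕ) (k : ℕ) (x : G m) : ℂ :=
  Complex.exp (2 * Real.pi * Complex.I * ((x k).val : ℂ) / (m k : ℂ))

/-- The Vilenkin system `ψ_n = ∏_k r_k^{n_k}`, where `n = ∑_k n_k M_k` is the expansion of `n`
in the generalized number system (the digits `n_k = (n / M_k) mod m_k` vanish for `k > n`). -/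
def psi (m : ℕ → ℕ) (n : ℕ) (x : G m) : ℂ :=
  ∏ k ∈ Finset.range (n + 1), rade m k x ^ (n / MM m k % m k)

/-- The Dirichlet kernels `D_n = ∑_{k=0}^{n-1} ψ_k`. -/
def D (m : ℕ → ℕ) (n : ℕ) (x : G m) : ℂ := ∑ k ∈ Finset.range n, psi m k x

/-- The Fejér kernels `K_n = (1/n) ∑_{k=1}^{n} D_k`. -/
def K (m : ℕ → ℕ) (n : ℕ) (x : G m) : ℂ := (n : ℂ)⁻¹ * ∑ k ∈ Finset.Icc 1 n, D m k x

/-- `Q_n = ∑_{k=0}^{n-1} q_k`. -/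
def Q (q : ℕ → ℝ) (n : ℕ) : ℝ := ∑ k ∈ Finset.range n, q k

/-- The Nörlund kernels `F_n = (1/Q_n) ∑_{k=1}^{n} q_{n-k} D_k`. -/
def F (m : ℕ → ℕ) (q : ℕ → ℝ) (n : ℕ) (x : G m) : ℂ :=
  ((Q q n : ℝ) : ℂ)⁻¹ * ∑ k ∈ Finset.Icc 1 n, (q (n - k) : ℂ) * D m k x

/-- The interval (cylinder) `I_n(x) = {y : y_j = x_j for all j < n}`. -/
def cyl (m : ℕ → ℕ) (n : ℕ) (x : G m) : Set (G m) := {y | ∀ j < n, y j = x j}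

/-- The element `s_k e_k` of `G_m` (value `s_k` in coordinate `k`, zero elsewhere). -/
def oneSpike (m : ℕ → ℕ) (k sk : ℕ) : G m := fun j => if j = k then (sk : ZMod (m j)) else 0

/-- The element `s_k e_k + s_l e_l` of `G_m` (for `k ≠ l`). -/
def twoSpike (m : ℕ → ℕ) (k sk l sl : ℕ) : G m :=
  fun j => if j = k then (sk : ZMod (m j)) else if j = l then (sl : ZMod (m j)) else 0

/-- The σ-algebra `𝔉_n` generated by the intervals `I_n(x)`, i.e. by the first `n`
coordinates. -/
def filt (m : ℕ → ℕ) (n : ℕ) : MeasurableSpace (G m) :=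
  MeasurableSpace.comap (fun x (i : Fin n) => x i.val) inferInstance

/-- `f = (f^{(n)})` is a martingale with respect to the filtration `(𝔉_n)` and the measure `μ`. -/
def IsMartingale (m : ℕ → ℕ) (μ : Measure (G m)) (f : ℕ → G m → ℂ) : Prop :=
  (∀ n, Integrable (f n) μ) ∧ (∀ n, Measurable[filt m n] (f n)) ∧
    ∀ n, ∀ s : Set (G m), MeasurableSet[filt m n] s →
      ∫ x in s, f (n + 1) x ∂μ = ∫ x in s, f n x ∂μ

/-- The `L_p`-quasinorm `(∫ g^p dμ)^{1/p}` of a nonnegative (extended-real-valued) function. -/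
def lpNormE (m : ℕ → ℕ) (μ : Measure (G m)) (p : ℝ) (g : G m → ℝ≥0∞) : ℝ≥0∞ :=
  (∫⁻ x, g x ^ p ∂μ) ^ (1 / p)

/-- The martingale Hardy space quasinorm `‖f‖_{H_p} = ‖sup_n |f^{(n)}|‖_p`. -/
def HpNorm (m : ℕ → ℕ) (μ : Measure (G m)) (p : ℝ) (f : ℕ → G m → ℂ) : ℝ≥0∞ :=
  lpNormE m μ p (fun x => ⨆ n, (‖f n x‖₊ : ℝ≥0∞))

/-- The Vilenkin-Fourier coefficients of a martingale:
`f̂(i) = lim_k ∫ f^{(k)} conj ψ_i dμ`. -/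
def mcoef (m : ℕ → ℕ) (μ : Measure (G m)) (f : ℕ → G m → ℂ) (i : ℕ) : ℂ :=
  limUnder atTop fun k => ∫ x, f k x * (starRingEnd ℂ) (psi m i x) ∂μ

/-- The partial sums `S_n f = ∑_{k=0}^{n-1} f̂(k) ψ_k` of the Vilenkin-Fourier series of a
martingale. -/
def mS (m : ℕ → ℕ) (μ : Measure (G m)) (f : ℕ → G m → ℂ) (n : ℕ) (x : G m) : ℂ :=
  ∑ k ∈ Finset.range n, mcoef m μ f k * psi m k x

/-- The Nörlund means `t_n f = (1/Q_n) ∑_{k=1}^{n} q_{n-k} S_k f` of a martingale. -/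
def mT (m : ℕ → ℕ) (q : ℕ → ℝ) (μ : Measure (G m)) (f : ℕ → G m → ℂ) (n : ℕ) (x : G m) : ℂ :=
  ((Q q n : ℝ) : ℂ)⁻¹ * ∑ k ∈ Finset.Icc 1 n, (q (n - k) : ℂ) * mS m μ f k x

/-- The Cesàro numbers `A_0^α = 0`, `A_n^α = (α+1)⋯(α+n)/n!`. -/
def AC (α : ℝ) (n : ℕ) : ℝ :=
  if n = 0 then 0 else (∏ j ∈ Finset.Icc 1 n, (α + (j : ℝ))) / (n.factorial : ℝ)

/-- The `(C,α)` (Cesàro) means `σ_n^α f = (1/A_n^α) ∑_{k=1}^{n} A_{n-k}^{α-1} S_k f` of a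
martingale. -/
def mCes (m : ℕ → ℕ) (α : ℝ) (μ : Measure (G m)) (f : ℕ → G m → ℂ) (n : ℕ) (x : G m) : ℂ :=
  ((AC α n : ℝ) : ℂ)⁻¹ * ∑ k ∈ Finset.Icc 1 n, ((AC (α - 1) (n - k) : ℝ) : ℂ) * mS m μ f k x

/-- The Fejér means `σ_n f = (1/n) ∑_{k=1}^{n} S_k f` of a martingale. -/
def mFej (m : ℕ → ℕ) (μ : Measure (G m)) (f : ℕ → G m → ℂ) (n : ℕ) (x : G m) : ℂ :=
  (n : ℂ)⁻¹ * ∑ k ∈ Finset.Icc 1 n, mS m μ f k x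

/-- The Vilenkin-Fourier coefficients of an integrable function. -/
def fcoef (m : ℕ → ℕ) (μ : Measure (G m)) (g : G m → ℂ) (i : ℕ) : ℂ :=
  ∫ x, g x * (starRingEnd ℂ) (psi m i x) ∂μ

/-- The partial sums of the Vilenkin-Fourier series of an integrable function. -/
def fS (m : ℕ → ℕ) (μ : Measure (G m)) (g : G m → ℂ) (n : ℕ) (x : G m) : ℂ :=
  ∑ k ∈ Finset.range n, fcoef m μ g k * psi m k x

/-- The Nörlund means of an integrable function. -/
def fT (m : ℕ → ℕ) (q : ℕ → ℝ) (μ : Measure (G m)) (g : G m → ℂ) (n : ℕ) (x : G m) : ℂ :=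
  ((Q q n : ℝ) : ℂ)⁻¹ * ∑ k ∈ Finset.Icc 1 n, (q (n - k) : ℂ) * fS m μ g k x


/-! ### Arithmetic of the generalized number system -/

theorem MM_pos {m : ℕ → ℕ} (hm : ∀ n, 2 ≤ m n) (n : ℕ) : 0 < MM m n := by
  induction n with
  | zero => simp [MM]
  | succ k ih => have := hm k; simp only [MM]; positivity

theorem two_mul_MM_le {m : ℕ → ℕ} (hm : ∀ n, 2 ≤ m n) (n : ℕ) : 2 * MM m n ≤ MM m (n + 1) := by
  simp only [MM]; exact Nat.mul_le_mul_right _ (hm n)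

theorem two_pow_le_MM {m : ℕ → ℕ} (hm : ∀ n, 2 ≤ m n) (n : ℕ) : 2 ^ n ≤ MM m n := by
  induction n with
  | zero => simp [MM]
  | succ k ih => have := two_mul_MM_le hm k; rw [pow_succ]; omega

theorem MM_mono {m : ℕ → ℕ} (hm : ∀ n, 2 ≤ m n) : Monotone (MM m) :=
  monotone_nat_of_le_succ fun n => by have := two_mul_MM_le hm n; omega

theorem lt_MM {m : ℕ → ℕ} (hm : ∀ n, 2 ≤ m n) (n : ℕ) : n < MM m n :=
  lt_of_lt_of_le Nat.lt_two_pow_self (two_pow_le_MM hm n)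

theorem MM_dvd (m : ℕ → ℕ) {a b : ℕ} (h : a ≤ b) : MM m a ∣ MM m b := by
  induction b, h using Nat.le_induction with
  | base => exact dvd_rfl
  | succ b _ ih => exact ih.trans (Dvd.intro_left _ rfl)

theorem psi_eq {m : ℕ → ℕ} (hm : ∀ n, 2 ≤ m n) {n L : ℕ} (h : n < MM m L) (x : G m) :
    psi m n x = ∏ k ∈ Finset.range L, rade m k x ^ (n / MM m k % m k) := by
  have key : ∀ a b : ℕ, a ≤ b → n < MM m a →
      ∏ k ∈ Finset.range b, rade m k x ^ (n / MM m k % m k)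
        = ∏ k ∈ Finset.range a, rade m k x ^ (n / MM m k % m k) := by
    intro a b hab hn
    symm
    apply Finset.prod_subset (Finset.range_mono hab)
    intro k _ hk
    have hk : a ≤ k := by simpa using hk
    rw [Nat.div_eq_of_lt (hn.trans_le (MM_mono hm hk))]
    simp
  unfold psi
  have h1 : n < MM m (n + 1) := (lt_MM hm n).trans_le (MM_mono hm (Nat.le_succ n))
  rcases le_total L (n + 1) with h2 | h2
  · exact key _ _ h2 h
  · exact (key _ _ h2 h1).symm

theorem psi_add {m : ℕ → ℕ} (hm : ∀ n, 2 ≤ m n) {A j r : ℕ} (hj : j < m A) (hr : r < MM m A)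
    (x : G m) : psi m (j * MM m A + r) x = rade m A x ^ j * psi m r x := by
  have hlt : j * MM m A + r < MM m (A + 1) := by
    simp only [MM]
    calc j * MM m A + r < j * MM m A + MM m A := by omega
      _ = (j + 1) * MM m A := by ring
      _ ≤ m A * MM m A := Nat.mul_le_mul_right _ hj
  rw [psi_eq hm hlt, psi_eq hm hr, Finset.prod_range_succ, mul_comm]
  have hA := MM_pos hm A
  congr 1
  · congr 1
    rw [mul_comm j, Nat.mul_add_div hA, Nat.div_eq_of_lt hr, add_zero, Nat.mod_eq_of_lt hj]
  · apply Finset.prod_congr rfl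
    intro k hk
    have hk : k < A := by simpa using hk
    congr 1
    obtain ⟨d, hd⟩ := MM_dvd m (show k + 1 ≤ A from hk)
    have hkp := MM_pos hm k
    have : j * MM m A + r = MM m k * (m k * (d * j)) + r := by
      rw [hd]; simp only [MM]; ring
    rw [this, Nat.mul_add_div hkp, Nat.mul_add_mod]

theorem rade_norm (m : ℕ → ℕ) (k : ℕ) (x : G m) : ‖rade m k x‖ = 1 := by
  unfold rade
  have : (2 * Real.pi * Complex.I * ((x k).val : ℂ) / (m k : ℂ))
      = ((2 * Real.pi * (x k).val / m k : ℝ) : ℂ) * Complex.I := by push_cast; ring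
  rw [this, Complex.norm_exp_ofReal_mul_I]

theorem rade_zero (m : ℕ → ℕ) (k : ℕ) (x : G m) (h : x k = 0) : rade m k x = 1 := by
  simp [rade, h]

theorem rade_eq_toCircle (m : ℕ → ℕ) [∀ n, NeZero (m n)] (k : ℕ) (x : G m) :
    rade m k x = (ZMod.toCircle (x k) : ℂ) := by
  rw [ZMod.toCircle_apply]; rfl

theorem rade_sub (m : ℕ → ℕ) [∀ n, NeZero (m n)] (k : ℕ) (x t : G m) :
    rade m k (x - t) = rade m k x * (starRingEnd ℂ) (rade m k t) := by
  simp only [rade_eq_toCircle, Pi.sub_apply, AddChar.map_sub_eq_div, Circle.coe_div]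
  rw [← Circle.coe_inv_eq_conj]; simp [div_eq_mul_inv]

theorem psi_sub (m : ℕ → ℕ) [∀ n, NeZero (m n)] (k : ℕ) (x t : G m) :
    psi m k (x - t) = psi m k x * (starRingEnd ℂ) (psi m k t) := by
  simp only [psi, rade_sub, mul_pow, Finset.prod_mul_distrib, map_prod, map_pow]

theorem psi_norm (m : ℕ → ℕ) (k : ℕ) (x : G m) : ‖psi m k x‖ = 1 := by
  simp [psi, rade_norm]

theorem rade_geom (m : ℕ → ℕ) [∀ n, NeZero (m n)] (k : ℕ) (x : G m) (h : x k ≠ 0) :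
    ∑ i ∈ Finset.range (m k), rade m k x ^ i = 0 := by
  have h1 : rade m k x - 1 ≠ 0 := by
    rw [sub_ne_zero, rade_eq_toCircle]
    intro h2
    apply h
    apply ZMod.injective_toCircle
    rw [AddChar.map_zero_eq_one]
    exact Circle.ext (by simpa using h2)
  have h2 : rade m k x ^ (m k) = 1 := by
    rw [rade_eq_toCircle, ← Circle.coe_pow, ← AddChar.map_nsmul_eq_pow]
    simp
  have := mul_geom_sum (rade m k x) (m k)
  rw [h2, sub_self] at this
  exact (mul_eq_zero.1 this).resolve_left h1

/-! ### Kernels -/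

/-- Unnormalized Fejér kernel. -/
def Kc (m : ℕ → ℕ) (n : ℕ) (x : G m) : ℂ := ∑ k ∈ Finset.range n, D m (k + 1) x

theorem D_add {m : ℕ → ℕ} (hm : ∀ n, 2 ≤ m n) {A j r : ℕ} (hj : j < m A) (hr : r ≤ MM m A)
    (x : G m) : D m (j * MM m A + r) x = D m (j * MM m A) x + rade m A x ^ j * D m r x := by
  unfold D
  rw [Finset.sum_range_add, Finset.mul_sum]
  congr 1
  apply Finset.sum_congr rfl
  intro k hk
  exact psi_add hm hj ((Finset.mem_range.1 hk).trans_le hr) x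

theorem D_mul {m : ℕ → ℕ} (hm : ∀ n, 2 ≤ m n) {A j : ℕ} (hj : j ≤ m A)
    (x : G m) : D m (j * MM m A) x = (∑ i ∈ Finset.range j, rade m A x ^ i) * D m (MM m A) x := by
  induction j with
  | zero => simp [D]
  | succ j ih =>
    rw [show (j + 1) * MM m A = j * MM m A + MM m A by ring, D_add hm hj le_rfl,
      ih (by omega), Finset.sum_range_succ]
    ring

theorem D_mul_norm {m : ℕ → ℕ} (hm : ∀ n, 2 ≤ m n) {A j : ℕ} (hj : j ≤ m A)
    (x : G m) : ‖D m (j * MM m A) x‖ ≤ j * ‖D m (MM m A) x‖ := by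
  rw [D_mul hm hj, norm_mul]
  gcongr
  refine (norm_sum_le _ _).trans ?_
  simp [rade_norm]

theorem Kc_add {m : ℕ → ℕ} (hm : ∀ n, 2 ≤ m n) {A j r : ℕ} (hj : j < m A) (hr : r ≤ MM m A)
    (x : G m) : Kc m (j * MM m A + r) x
      = Kc m (j * MM m A) x + r * D m (j * MM m A) x + rade m A x ^ j * Kc m r x := by
  unfold Kc
  rw [Finset.sum_range_add, Finset.mul_sum, add_assoc]
  congr 1
  have : (r : ℂ) * D m (j * MM m A) x = ∑ k ∈ Finset.range r, D m (j * MM m A) x := by simp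
  rw [this, ← Finset.sum_add_distrib]
  apply Finset.sum_congr rfl
  intro k hk
  rw [add_assoc]
  exact D_add hm hj ((Finset.mem_range.1 hk).trans_le hr) x

theorem Kc_mul {m : ℕ → ℕ} (hm : ∀ n, 2 ≤ m n) {A j : ℕ} (hj : j ≤ m A)
    (x : G m) : Kc m (j * MM m A) x = ∑ i ∈ Finset.range j, (MM m A : ℂ) * D m (i * MM m A) x
      + (∑ i ∈ Finset.range j, rade m A x ^ i) * Kc m (MM m A) x := by
  induction j with
  | zero => simp [Kc]
  | succ j ih =>
    rw [show (j + 1) * MM m A = j * MM m A + MM m A by ring, Kc_add hm hj le_rfl,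
      ih (by omega), Finset.sum_range_succ, Finset.sum_range_succ]
    ring

theorem sum_D_norm {m : ℕ → ℕ} (hm : ∀ n, 2 ≤ m n) {B : ℕ} (hB : ∀ n, m n ≤ B) {A j : ℕ}
    (hj : j ≤ m A) (x : G m) :
    ‖∑ i ∈ Finset.range j, (MM m A : ℂ) * D m (i * MM m A) x‖
      ≤ (B : ℝ) ^ 2 * (MM m A * ‖D m (MM m A) x‖) := by
  have hjB : (j : ℝ) ≤ B := by exact_mod_cast hj.trans (hB A)
  calc _ ≤ ∑ i ∈ Finset.range j, (B : ℝ) * (MM m A * ‖D m (MM m A) x‖) := by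
        refine norm_sum_le_of_le _ fun i hi => ?_
        have hi : i < j := Finset.mem_range.1 hi
        rw [norm_mul, Complex.norm_natCast]
        have h1 := D_mul_norm hm (A := A) (j := i) (by omega) x
        have h2 : (i : ℝ) ≤ B := le_trans (by exact_mod_cast hi.le) hjB
        calc (MM m A : ℝ) * ‖D m (i * MM m A) x‖ ≤ MM m A * (i * ‖D m (MM m A) x‖) := by gcongr
          _ ≤ MM m A * (B * ‖D m (MM m A) x‖) := by gcongr
          _ = _ := by ring
    _ = j * (B * (MM m A * ‖D m (MM m A) x‖)) := by simp
    _ ≤ B * (B * (MM m A * ‖D m (MM m A) x‖)) := by gcongr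
    _ = _ := by ring

/-- `x` and `t` agree at all places `j < A`, `j ≠ s`. -/
def rel (m : ℕ → ℕ) (A s : ℕ) (x t : G m) : Prop := ∀ j < A, j ≠ s → t j = x j

open Classical in
/-- The basic majorant. -/
def W (m : ℕ → ℕ) (A : ℕ) (x : G m) : ℝ :=
  ∑ s ∈ Finset.range (A + 1), if rel m A s 0 x then (MM m s : ℝ) * MM m A else 0

theorem W_nonneg (m : ℕ → ℕ) (A : ℕ) (x : G m) : 0 ≤ W m A x := by
  unfold W; apply Finset.sum_nonneg; intro s _; split_ifs <;> positivity

theorem D_MM_succ {m : ℕ → ℕ} (hm : ∀ n, 2 ≤ m n) (A : ℕ) (x : G m) :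
    D m (MM m (A + 1)) x = (∑ i ∈ Finset.range (m A), rade m A x ^ i) * D m (MM m A) x :=
  D_mul hm le_rfl x

theorem D_MM_norm {m : ℕ → ℕ} (hm : ∀ n, 2 ≤ m n) (A : ℕ) (x : G m) :
    ‖D m (MM m A) x‖ ≤ MM m A := by
  unfold D
  refine (norm_sum_le _ _).trans ?_
  simp [psi_norm]

theorem D_MM_zero {m : ℕ → ℕ} (hm : ∀ n, 2 ≤ m n) (A : ℕ) (x : G m) (h : ¬ rel m A A 0 x) :
    D m (MM m A) x = 0 := by
  haveI : ∀ n, NeZero (m n) := fun n => ⟨by have := hm n; omega⟩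
  induction A with
  | zero => exact absurd (fun j hj => absurd hj (by omega)) h
  | succ A ih =>
    rw [D_MM_succ hm]
    by_cases hx : x A = 0
    · rw [ih, mul_zero]
      intro hr
      apply h
      intro j hj _
      rcases Nat.lt_succ_iff_lt_or_eq.1 hj with h1 | rfl
      · exact hr j h1 h1.ne
      · exact hx
    · rw [rade_geom m A x hx, zero_mul]

theorem D_le_W {m : ℕ → ℕ} (hm : ∀ n, 2 ≤ m n) (A : ℕ) (x : G m) :
    MM m A * ‖D m (MM m A) x‖ ≤ W m A x := by
  by_cases h : rel m A A 0 x
  · unfold W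
    rw [Finset.sum_range_succ, if_pos h]
    have : (0 : ℝ) ≤ ∑ s ∈ Finset.range A, @ite ℝ (rel m A s 0 x) (Classical.propDecidable _) ((MM m s : ℝ) * MM m A) 0 :=
      Finset.sum_nonneg fun s _ => by split_ifs <;> positivity
    have := mul_le_mul_of_nonneg_left (D_MM_norm hm A x) (Nat.cast_nonneg (α := ℝ) (MM m A))
    linarith
  · rw [D_MM_zero hm A x h]; simpa using W_nonneg m A x

theorem W_succ {m : ℕ → ℕ} (hm : ∀ n, 2 ≤ m n) (A : ℕ) (x : G m) :
    MM m A * ‖D m (MM m A) x‖ + (if x A = 0 then (m A : ℝ) * W m A x else 0) ≤ W m (A + 1) x := by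
  classical
  have hMM : (MM m (A + 1) : ℝ) = m A * MM m A := by simp [MM]
  have h2 : (2 : ℝ) ≤ m A := by exact_mod_cast hm A
  have h1 : MM m A * ‖D m (MM m A) x‖ ≤ if rel m (A + 1) A 0 x then (MM m A : ℝ) * MM m (A + 1) else 0 := by
    split_ifs with h
    · have := D_MM_norm hm A x
      gcongr
      refine this.trans ?_
      rw [hMM]
      nlinarith [(Nat.cast_nonneg (MM m A) : (0 : ℝ) ≤ _)]
    · rw [D_MM_zero hm]
      · simp
      · intro h3
        exact h fun j hj hjA => h3 j (by omega) hjA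
  have hW : W m (A + 1) x = (∑ s ∈ Finset.range A, if rel m (A + 1) s 0 x then (MM m s : ℝ) * MM m (A + 1) else 0)
      + (if rel m (A + 1) A 0 x then (MM m A : ℝ) * MM m (A + 1) else 0)
      + (if rel m (A + 1) (A + 1) 0 x then (MM m (A + 1) : ℝ) * MM m (A + 1) else 0) := by
    unfold W
    rw [Finset.sum_range_succ, Finset.sum_range_succ]
  have hp1 : (0 : ℝ) ≤ ∑ s ∈ Finset.range A, if rel m (A + 1) s 0 x then (MM m s : ℝ) * MM m (A + 1) else 0 :=
      Finset.sum_nonneg fun s _ => by split_ifs <;> positivity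
  have hp2 : (0 : ℝ) ≤ if rel m (A + 1) (A + 1) 0 x then (MM m (A + 1) : ℝ) * MM m (A + 1) else 0 := by
    split_ifs <;> positivity
  split_ifs with hx
  · have hW0 : W m A x = (∑ s ∈ Finset.range A, if rel m A s 0 x then (MM m s : ℝ) * MM m A else 0)
      + (if rel m A A 0 x then (MM m A : ℝ) * MM m A else 0) := by
      unfold W
      rw [Finset.sum_range_succ]
    have e1 : (m A : ℝ) * (∑ s ∈ Finset.range A, if rel m A s 0 x then (MM m s : ℝ) * MM m A else 0)
       = ∑ s ∈ Finset.range A, if rel m (A + 1) s 0 x then (MM m s : ℝ) * MM m (A + 1) else 0 := by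
      rw [Finset.mul_sum]
      apply Finset.sum_congr rfl
      intro s hs
      have hs : s < A := Finset.mem_range.1 hs
      have : rel m (A + 1) s 0 x ↔ rel m A s 0 x := by
        constructor
        · intro h j hj; exact h j (by omega)
        · intro h j hj hjs
          rcases Nat.lt_succ_iff_lt_or_eq.1 hj with h1 | rfl
          · exact h j h1 hjs
          · exact hx
      simp only [this, hMM]
      split_ifs <;> ring
    have e2 : (m A : ℝ) * (if rel m A A 0 x then (MM m A : ℝ) * MM m A else 0)
        ≤ if rel m (A + 1) (A + 1) 0 x then (MM m (A + 1) : ℝ) * MM m (A + 1) else 0 := by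
      have : rel m (A + 1) (A + 1) 0 x ↔ rel m A A 0 x := by
        constructor
        · intro h j hj _; exact h j (by omega) (by omega)
        · intro h j hj hjs
          rcases Nat.lt_succ_iff_lt_or_eq.1 hj with h1 | rfl
          · exact h j h1 h1.ne
          · exact hx
      simp only [this, hMM]
      split_ifs
      · nlinarith [mul_nonneg (Nat.cast_nonneg (MM m A) : (0 : ℝ) ≤ _) (Nat.cast_nonneg (MM m A) : (0 : ℝ) ≤ _)]
      · simp
    rw [hW, hW0, mul_add, e1]
    linarith
  · rw [hW]; linarith

theorem Kc_MM_norm {m : ℕ → ℕ} (hm : ∀ n, 2 ≤ m n) {B : ℕ} (hB : ∀ n, m n ≤ B) (A : ℕ) (x : G m) :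
    ‖Kc m (MM m A) x‖ ≤ (B : ℝ) ^ 2 * W m A x := by
  haveI : ∀ n, NeZero (m n) := fun n => ⟨by have := hm n; omega⟩
  have hB1 : (1 : ℝ) ≤ B := by exact_mod_cast (le_trans (by norm_num) (hm 0)).trans (hB 0)
  induction A with
  | zero =>
    have : W m 0 x = 1 := by simp [W, MM, rel]
    rw [this]
    simp [Kc, MM, D, psi_norm]
    exact_mod_cast hB1
  | succ A ih =>
    rw [show MM m (A + 1) = m A * MM m A from rfl, Kc_mul hm le_rfl]
    refine (norm_add_le _ _).trans ?_
    have h1 := sum_D_norm hm hB (A := A) le_rfl x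
    have h2 : ‖(∑ i ∈ Finset.range (m A), rade m A x ^ i) * Kc m (MM m A) x‖
        ≤ (B : ℝ) ^ 2 * (if x A = 0 then (m A : ℝ) * W m A x else 0) := by
      split_ifs with hx
      · rw [rade_zero m A x hx, norm_mul]
        simp only [one_pow, Finset.sum_const, Finset.card_range, nsmul_eq_mul, mul_one,
          Complex.norm_natCast]
        nlinarith [(Nat.cast_nonneg (m A) : (0 : ℝ) ≤ _)]
      · rw [rade_geom m A x hx]; simp
    have h3 := mul_le_mul_of_nonneg_left (W_succ hm A x) (sq_nonneg (B : ℝ))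
    linarith

theorem Kc_norm {m : ℕ → ℕ} (hm : ∀ n, 2 ≤ m n) {B : ℕ} (hB : ∀ n, m n ≤ B) (N n : ℕ)
    (hn : n < MM m N) (x : G m) :
    ‖Kc m n x‖ ≤ (3 * (B : ℝ) ^ 3) * ∑ A ∈ Finset.range N, W m A x := by
  have hB1 : (1 : ℝ) ≤ B := by exact_mod_cast (le_trans (by norm_num) (hm 0)).trans (hB 0)
  induction N generalizing n with
  | zero =>
    have : n = 0 := by simpa [MM] using hn
    subst this
    simp [Kc]
  | succ N ih =>
    have hMp := MM_pos hm N
    set j := n / MM m N with hjdef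
    set r := n % MM m N with hrdef
    have hnj : n = j * MM m N + r := by rw [mul_comm]; exact (Nat.div_add_mod _ _).symm
    have hr : r < MM m N := Nat.mod_lt _ hMp
    have hj : j < m N := by
      rw [hjdef, Nat.div_lt_iff_lt_mul hMp]; exact hn
    have hjB : (j : ℝ) ≤ B := by exact_mod_cast hj.le.trans (hB N)
    rw [hnj, Kc_add hm hj hr.le, Kc_mul hm hj.le, Finset.sum_range_succ]
    have h1 := sum_D_norm hm hB (A := N) hj.le x
    have h2 : ‖(∑ i ∈ Finset.range j, rade m N x ^ i) * Kc m (MM m N) x‖ ≤ B * (B ^ 2 * W m N x) := by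
      rw [norm_mul]
      have : ‖∑ i ∈ Finset.range j, rade m N x ^ i‖ ≤ B := by
        refine (norm_sum_le _ _).trans ?_
        simpa [rade_norm] using hjB
      gcongr
      exact Kc_MM_norm hm hB N x
    have h3 : ‖(r : ℂ) * D m (j * MM m N) x‖ ≤ B * W m N x := by
      rw [norm_mul, Complex.norm_natCast]
      calc (r : ℝ) * ‖D m (j * MM m N) x‖ ≤ MM m N * (B * ‖D m (MM m N) x‖) := by
            have := D_mul_norm hm hj.le x
            gcongr
            exact this.trans (by gcongr)
        _ = B * (MM m N * ‖D m (MM m N) x‖) := by ring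
        _ ≤ _ := by gcongr; exact D_le_W hm N x
    have h4 : ‖rade m N x ^ j * Kc m r x‖ ≤ (3 * (B : ℝ) ^ 3) * ∑ A ∈ Finset.range N, W m A x := by
      rw [norm_mul, norm_pow, rade_norm]; simpa using ih r hr
    have h5 := D_le_W hm N x
    have hW := W_nonneg m N x
    have h6 : (B : ℝ) ^ 2 * (MM m N * ‖D m (MM m N) x‖) ≤ B ^ 3 * W m N x := by
      have : (B : ℝ) ^ 2 ≤ B ^ 3 := pow_le_pow_right₀ hB1 (by norm_num)
      gcongr
    have h7 : (B : ℝ) * W m N x ≤ B ^ 3 * W m N x := by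
      have : (B : ℝ) ^ 1 ≤ B ^ 3 := pow_le_pow_right₀ hB1 (by norm_num)
      rw [pow_one] at this
      gcongr
    refine (norm_add_le _ _).trans ?_
    refine (add_le_add_left ((norm_add_le _ _).trans (add_le_add_left (norm_add_le _ _) _)) _).trans ?_
    nlinarith


/-! ### Functions depending on finitely many coordinates -/

/-- `u` depends only on the first `n` coordinates. -/
def Dep (m : ℕ → ℕ) {β : Type*} (n : ℕ) (u : G m → β) : Prop :=
  ∀ x y : G m, (∀ j < n, y j = x j) → u y = u x

theorem Dep.mono {m : ℕ → ℕ} {β : Type*} {a b : ℕ} (h : a ≤ b) {u : G m → β} (hu : Dep m a u) :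
    Dep m b u := fun x y hxy => hu x y fun j hj => hxy j (hj.trans_le h)

/-- Extension by zero of a finite word. -/
def ext0 (m : ℕ → ℕ) (n : ℕ) (w : ∀ i : Fin n, ZMod (m i)) : G m :=
  fun j => if h : j < n then w ⟨j, h⟩ else 0

theorem Dep.eq_comp {m : ℕ → ℕ} {β : Type*} {n : ℕ} {u : G m → β} (hu : Dep m n u) :
    u = (fun w => u (ext0 m n w)) ∘ (fun (x : G m) (i : Fin n) => x i.val) := by
  funext x
  refine hu _ _ fun j hj => ?_
  simp [ext0, hj]

theorem Dep.measurable {m : ℕ → ℕ} [∀ n, NeZero (m n)] {β : Type*} [MeasurableSpace β] {n : ℕ}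
    {u : G m → β} (hu : Dep m n u) : Measurable u := by
  rw [hu.eq_comp]
  refine (measurable_of_countable _).comp ?_
  exact measurable_pi_lambda _ fun i => measurable_pi_apply _

theorem Dep.integrable {m : ℕ → ℕ} [∀ n, NeZero (m n)] {μ : Measure (G m)} [IsProbabilityMeasure μ]
    {n : ℕ} {u : G m → ℂ} (hu : Dep m n u) : Integrable u μ := by
  have hfin : (Set.range fun w => ‖u (ext0 m n w)‖).Finite := Set.finite_range _
  obtain ⟨C, hC⟩ := hfin.bddAbove
  refine Integrable.of_bound hu.measurable.aestronglyMeasurable C (Eventually.of_forall fun x => ?_)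
  rw [hu.eq_comp]
  exact hC ⟨_, rfl⟩

theorem dep_of_filt {m : ℕ → ℕ} {n : ℕ} {u : G m → ℂ} (hu : Measurable[filt m n] u) :
    Dep m n u := by
  intro x y hxy
  obtain ⟨S, -, hS⟩ := hu (measurableSet_singleton (u x))
  have h1 : x ∈ u ⁻¹' {u x} := rfl
  rw [← hS] at h1
  have h2 : y ∈ u ⁻¹' {u x} := by
    rw [← hS]
    have : (fun i : Fin n => y i.val) = fun i : Fin n => x i.val := funext fun i => hxy i i.2
    simpa [this] using h1
  exact h2

theorem cyl_filt (m : ℕ → ℕ) [∀ n, NeZero (m n)] (n : ℕ) (x : G m) :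
    MeasurableSet[filt m n] (cyl m n x) := by
  refine ⟨{fun i : Fin n => x i.val}, measurableSet_singleton _, ?_⟩
  ext y
  simp only [cyl, Set.mem_preimage, Set.mem_singleton_iff, Set.mem_ofPred_eq, funext_iff]
  exact ⟨fun h j hj => h ⟨j, hj⟩, fun h i => h i i.2⟩

theorem cyl_meas (m : ℕ → ℕ) (n : ℕ) (x : G m) : MeasurableSet (cyl m n x) := by
  have : cyl m n x = ⋂ j, ⋂ (_ : j < n), (fun y : G m => y j) ⁻¹' {x j} := by
    ext y; simp [cyl]
  rw [this]
  exact MeasurableSet.iInter fun j => MeasurableSet.iInter fun _ =>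
    (measurable_pi_apply j) (measurableSet_singleton _)

theorem integral_dep {m : ℕ → ℕ} [∀ n, NeZero (m n)] {μ : Measure (G m)} [IsProbabilityMeasure μ]
    {n : ℕ} {u F : G m → ℂ} (hu : Dep m n u) (hF : Integrable F μ) :
    ∫ x, F x * u x ∂μ = ∑ w : (∀ i : Fin n, ZMod (m i)),
      (∫ x in cyl m n (ext0 m n w), F x ∂μ) * u (ext0 m n w) := by
  have hcongr : ∀ w : (∀ i : Fin n, ZMod (m i)), ∀ x ∈ cyl m n (ext0 m n w),
      F x * u (ext0 m n w) = F x * u x := fun w x hx => by rw [hu _ _ hx]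
  have hun : (⋃ w : (∀ i : Fin n, ZMod (m i)), cyl m n (ext0 m n w)) = Set.univ := by
    rw [Set.eq_univ_iff_forall]
    intro x
    rw [Set.mem_iUnion]
    refine ⟨fun i => x i.val, fun j hj => ?_⟩
    simp [ext0, hj]
  rw [← setIntegral_univ, ← hun, integral_iUnion_fintype]
  · apply Finset.sum_congr rfl
    intro w _
    rw [← setIntegral_congr_fun (cyl_meas m n _) (hcongr w), integral_mul_const]
  · exact fun w => cyl_meas m n _
  · intro w v hwv
    rw [Function.onFun, Set.disjoint_left]
    intro x hx hy
    apply hwv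
    funext i
    have h1 := hx i i.2
    have h2 := hy i i.2
    rw [h1] at h2
    simpa [ext0] using h2
  · intro w
    exact IntegrableOn.congr_fun ((hF.integrableOn (s := cyl m n (ext0 m n w))).mul_const _)
      (hcongr w) (cyl_meas m n _)

theorem mart_pair {m : ℕ → ℕ} [∀ n, NeZero (m n)] {μ : Measure (G m)} [IsProbabilityMeasure μ]
    {f : ℕ → G m → ℂ} (hf : IsMartingale m μ f) {n : ℕ} {u : G m → ℂ} (hu : Dep m n u) :
    ∫ x, f (n + 1) x * u x ∂μ = ∫ x, f n x * u x ∂μ := by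
  rw [integral_dep hu (hf.1 _), integral_dep hu (hf.1 _)]
  apply Finset.sum_congr rfl
  intro w _
  rw [hf.2.2 n _ (cyl_filt m n _)]

theorem psi_dep {m : ℕ → ℕ} (hm : ∀ n, 2 ≤ m n) {i k : ℕ} (h : i < MM m k) : Dep m k (psi m i) := by
  intro x y hxy
  rw [psi_eq hm h, psi_eq hm h]
  apply Finset.prod_congr rfl
  intro j hj
  simp only [rade, hxy j (Finset.mem_range.1 hj)]

theorem Kc_dep {m : ℕ → ℕ} (hm : ∀ n, 2 ≤ m n) {n k : ℕ} (h : n ≤ MM m k) : Dep m k (Kc m n) := by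
  intro x y hxy
  simp only [Kc, D]
  apply Finset.sum_congr rfl
  intro i hi
  apply Finset.sum_congr rfl
  intro j hj
  have hi := Finset.mem_range.1 hi
  have hj := Finset.mem_range.1 hj
  exact psi_dep hm (by omega) x y hxy

theorem Kc_sub_dep {m : ℕ → ℕ} (hm : ∀ n, 2 ≤ m n) {n k : ℕ} (h : n ≤ MM m k) (x : G m) :
    Dep m k (fun t => Kc m n (x - t)) := by
  intro s t hst
  refine Kc_dep hm h _ _ fun j hj => ?_
  simp [hst j hj]

theorem mcoef_eq {m : ℕ → ℕ} (hm : ∀ n, 2 ≤ m n) [∀ n, NeZero (m n)] {μ : Measure (G m)}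
    [IsProbabilityMeasure μ] {f : ℕ → G m → ℂ} (hf : IsMartingale m μ f) {i N : ℕ}
    (h : i < MM m N) :
    mcoef m μ f i = ∫ x, f N x * (starRingEnd ℂ) (psi m i x) ∂μ := by
  unfold mcoef
  have key : ∀ k, N ≤ k → ∫ x, f k x * (starRingEnd ℂ) (psi m i x) ∂μ
      = ∫ x, f N x * (starRingEnd ℂ) (psi m i x) ∂μ := by
    intro k hk
    induction k, hk using Nat.le_induction with
    | base => rfl
    | succ k hk ih =>
      rw [← ih]
      apply mart_pair hf
      intro x y hxy
      simp only [psi_dep hm (h.trans_le (MM_mono hm hk)) x y hxy]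
  apply Tendsto.limUnder_eq
  refine tendsto_const_nhds.congr' ?_
  filter_upwards [eventually_ge_atTop N] with k hk using (key k hk).symm

theorem sum_Icc_range {β : Type*} [AddCommMonoid β] (g : ℕ → β) (n : ℕ) :
    ∑ k ∈ Finset.Icc 1 n, g k = ∑ k ∈ Finset.range n, g (k + 1) := by
  induction n with
  | zero => simp
  | succ n ih => rw [Finset.sum_Icc_succ_top (by omega), ih, Finset.sum_range_succ]

/-- Convolution with the unnormalized Fejér kernel. -/
def Sg (m : ℕ → ℕ) (μ : Measure (G m)) (n : ℕ) (u : G m → ℂ) (x : G m) : ℂ :=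
  ∫ t, u t * Kc m n (x - t) ∂μ

theorem mFej_eq {m : ℕ → ℕ} (hm : ∀ n, 2 ≤ m n) [∀ n, NeZero (m n)] {μ : Measure (G m)}
    [IsProbabilityMeasure μ] {f : ℕ → G m → ℂ} (hf : IsMartingale m μ f) {n N : ℕ}
    (h : n ≤ MM m N) (x : G m) :
    mFej m μ f n x = (n : ℂ)⁻¹ * Sg m μ n (f N) x := by
  have hfN : Dep m N (f N) := dep_of_filt (hf.2.1 N)
  unfold mFej Sg
  rw [sum_Icc_range]
  congr 1
  simp only [mS, Kc, D, Finset.mul_sum]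
  have hInt : ∀ j, j < MM m N → Integrable (fun t => f N t * psi m j (x - t)) μ := by
    intro j hj
    apply Dep.integrable (n := N)
    intro s t hst
    have : psi m j (x - t) = psi m j (x - s) := psi_dep hm hj _ _ fun i hi => by simp [hst i hi]
    simp only [this, hfN s t hst]
  rw [integral_finsetSum]
  · apply Finset.sum_congr rfl
    intro k hk
    have hk := Finset.mem_range.1 hk
    rw [integral_finsetSum]
    · apply Finset.sum_congr rfl
      intro j hj
      have hj := Finset.mem_range.1 hj
      rw [mcoef_eq hm hf (N := N) (by omega), ← integral_mul_const]
      congr 1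
      funext t
      rw [psi_sub]; ring
    · intro j hj
      have hj := Finset.mem_range.1 hj
      exact hInt j (by omega)
  · intro k hk
    have hk := Finset.mem_range.1 hk
    apply integrable_finsetSum
    intro j hj
    have hj := Finset.mem_range.1 hj
    exact hInt j (by omega)

/-! ### The positive operators `T` -/

theorem rel_meas (m : ℕ → ℕ) (A s : ℕ) (x : G m) : MeasurableSet {t | rel m A s x t} := by
  have : {t | rel m A s x t} = ⋂ j, ⋂ (_ : j < A), ⋂ (_ : j ≠ s), (fun y : G m => y j) ⁻¹' {x j} := by
    ext y; simp [rel]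
  rw [this]
  exact MeasurableSet.iInter fun j => MeasurableSet.iInter fun _ => MeasurableSet.iInter fun _ =>
    (measurable_pi_apply j) (measurableSet_singleton _)

theorem rel_meas2 (m : ℕ → ℕ) [∀ n, NeZero (m n)] (A s : ℕ) :
    MeasurableSet {p : G m × G m | rel m A s p.1 p.2} := by
  have : {p : G m × G m | rel m A s p.1 p.2}
      = ⋂ j, ⋂ (_ : j < A), ⋂ (_ : j ≠ s), {p : G m × G m | p.2 j = p.1 j} := by
    ext y; simp [rel]
  rw [this]
  exact MeasurableSet.iInter fun j => MeasurableSet.iInter fun _ => MeasurableSet.iInter fun _ =>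
    measurableSet_eq_fun ((measurable_pi_apply j).comp measurable_snd)
      ((measurable_pi_apply j).comp measurable_fst)

theorem rel_symm {m : ℕ → ℕ} {A s : ℕ} {x t : G m} : rel m A s x t ↔ rel m A s t x :=
  ⟨fun h j hj hs => (h j hj hs).symm, fun h j hj hs => (h j hj hs).symm⟩

theorem rel_eq_cyl (m : ℕ → ℕ) {A s : ℕ} (h : A ≤ s) (x : G m) :
    {t | rel m A s x t} = cyl m A x := by
  ext t
  exact ⟨fun h1 j hj => h1 j hj (by omega), fun h1 j hj _ => h1 j hj⟩

theorem rel_eq_union (m : ℕ → ℕ) {A s : ℕ} (h : s < A) (x : G m) :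
    {t | rel m A s x t} = ⋃ c : ZMod (m s), cyl m A (Function.update x s c) := by
  ext t
  simp only [Set.mem_ofPred_eq, Set.mem_iUnion]
  constructor
  · intro h1
    refine ⟨t s, fun j hj => ?_⟩
    by_cases hjs : j = s
    · subst hjs; simp
    · rw [Function.update_of_ne hjs]; exact h1 j hj hjs
  · rintro ⟨c, hc⟩ j hj hjs
    have := hc j hj
    rwa [Function.update_of_ne hjs] at this

/-- The positive operator attached to `rel`. -/
def T (m : ℕ → ℕ) (μ : Measure (G m)) (A s : ℕ) (h : G m → ℝ≥0∞) (x : G m) : ℝ≥0∞ :=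
  ∫⁻ t in {t | rel m A s x t}, h t ∂μ

section
variable {m : ℕ → ℕ} [∀ n, NeZero (m n)] {μ : Measure (G m)} [IsProbabilityMeasure μ]

theorem lintegral_cyl
    (hμ : ∀ (n : ℕ) (x : G m), μ (cyl m n x) = ((MM m n : ℝ≥0∞))⁻¹)
    {p A : ℕ} (hpA : p ≤ A) {h : G m → ℝ≥0∞} (hh : Dep m p h) (x : G m) :
    ∫⁻ t in cyl m A x, h t ∂μ = h x * (MM m A : ℝ≥0∞)⁻¹ := by
  rw [setLIntegral_congr_fun (g := fun _ => h x) (cyl_meas m A x)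
    (fun t ht => (hh.mono hpA) x t ht), setLIntegral_const, hμ]

theorem T_eq_of_lt
    (hμ : ∀ (n : ℕ) (x : G m), μ (cyl m n x) = ((MM m n : ℝ≥0∞))⁻¹)
    {p A s : ℕ} (hpA : p ≤ A) (hs : s < A) {h : G m → ℝ≥0∞} (hh : Dep m p h)
    (x : G m) :
    T m μ A s h x = (∑ c : ZMod (m s), h (Function.update x s c)) * (MM m A : ℝ≥0∞)⁻¹ := by
  unfold T
  rw [rel_eq_union m hs, lintegral_iUnion (fun c => cyl_meas m A _), tsum_fintype, Finset.sum_mul]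
  · apply Finset.sum_congr rfl
    intro c _
    exact lintegral_cyl hμ hpA hh _
  · intro c d hcd
    rw [Function.onFun, Set.disjoint_left]
    intro t h1 h2
    apply hcd
    have h1 := h1 s hs
    have h2 := h2 s hs
    simp only [Function.update_self] at h1 h2
    rw [← h1, ← h2]

theorem T_eq_of_ge
    (hμ : ∀ (n : ℕ) (x : G m), μ (cyl m n x) = ((MM m n : ℝ≥0∞))⁻¹)
    {p A s : ℕ} (hpA : p ≤ A) (hs : A ≤ s) {h : G m → ℝ≥0∞} (hh : Dep m p h)
    (x : G m) :
    T m μ A s h x = h x * (MM m A : ℝ≥0∞)⁻¹ := by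
  unfold T
  rw [rel_eq_cyl m hs]
  exact lintegral_cyl hμ hpA hh x

theorem rel_measure_le
    (hμ : ∀ (n : ℕ) (x : G m), μ (cyl m n x) = ((MM m n : ℝ≥0∞))⁻¹)
    {B : ℕ} (hB : ∀ n, m n ≤ B) (A s : ℕ) (x : G m) :
    μ {t | rel m A s x t} ≤ B * (MM m A : ℝ≥0∞)⁻¹ := by
  have hB1 : 1 ≤ B := (NeZero.one_le (n := m 0)).trans (hB 0)
  have h1 : ∀ s, μ {t | rel m A s x t} = T m μ A s (fun _ => 1) x := by
    intro s; unfold T; simp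
  have hd : Dep m 0 (fun _ : G m => (1 : ℝ≥0∞)) := fun _ _ _ => rfl
  rw [h1]
  rcases lt_or_ge s A with hs | hs
  · rw [T_eq_of_lt hμ (Nat.zero_le A) hs hd]
    gcongr
    simpa using (by exact_mod_cast hB s : (m s : ℝ≥0∞) ≤ B)
  · rw [T_eq_of_ge hμ (Nat.zero_le A) hs hd]
    gcongr
    exact_mod_cast hB1

theorem lintegral_T_le
    (hμ : ∀ (n : ℕ) (x : G m), μ (cyl m n x) = ((MM m n : ℝ≥0∞))⁻¹)
    {B : ℕ} (hB : ∀ n, m n ≤ B) (A s : ℕ) {h : G m → ℝ≥0∞} (hh : Measurable h) :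
    ∫⁻ x, T m μ A s h x ∂μ ≤ B * (MM m A : ℝ≥0∞)⁻¹ * ∫⁻ t, h t ∂μ := by
  have h1 : ∀ x, T m μ A s h x
      = ∫⁻ t, {p : G m × G m | rel m A s p.1 p.2}.indicator (fun p => h p.2) (x, t) ∂μ := by
    intro x
    unfold T
    rw [← lintegral_indicator (rel_meas m A s x)]
    rfl
  simp only [h1]
  have hmeas : Measurable ({p : G m × G m | rel m A s p.1 p.2}.indicator (fun p => h p.2)) :=
    (hh.comp measurable_snd).indicator (rel_meas2 m A s)
  rw [lintegral_lintegral_swap (f := fun x t =>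
    {p : G m × G m | rel m A s p.1 p.2}.indicator (fun p => h p.2) (x, t)) hmeas.aemeasurable, ← lintegral_const_mul _ hh]
  apply lintegral_mono
  intro t
  have : ∀ x, {p : G m × G m | rel m A s p.1 p.2}.indicator (fun p => h p.2) (x, t)
      = {x | rel m A s t x}.indicator (fun _ => h t) x := by
    intro x
    by_cases hx : rel m A s x t
    · rw [Set.indicator_of_mem (show (x, t) ∈ {p : G m × G m | rel m A s p.1 p.2} from hx),
        Set.indicator_of_mem (show x ∈ {x | rel m A s t x} from rel_symm.1 hx)]
    · rw [Set.indicator_of_notMem (show (x, t) ∉ {p : G m × G m | rel m A s p.1 p.2} from hx),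
        Set.indicator_of_notMem (show x ∉ {x | rel m A s t x} from fun h => hx (rel_symm.1 h))]
  simp only [this]
  rw [lintegral_indicator (rel_meas m A s t), setLIntegral_const, mul_comm]
  gcongr
  exact rel_measure_le hμ hB A s t

theorem T_meas (A s : ℕ) {h : G m → ℝ≥0∞} (hh : Measurable h) : Measurable (T m μ A s h) := by
  have h1 : T m μ A s h = fun x =>
      ∫⁻ t, {p : G m × G m | rel m A s p.1 p.2}.indicator (fun p => h p.2) (x, t) ∂μ := by
    funext x
    unfold T
    rw [← lintegral_indicator (rel_meas m A s x)]
    rfl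
  rw [h1]
  exact ((hh.comp measurable_snd).indicator (rel_meas2 m A s)).lintegral_prod_right'

theorem T_sqrt
    (hμ : ∀ (n : ℕ) (x : G m), μ (cyl m n x) = ((MM m n : ℝ≥0∞))⁻¹)
    {A s p : ℕ} (hm : ∀ n, 2 ≤ m n) (hA : A ≤ p) {h : G m → ℝ≥0∞} (hh : Dep m p h) (x : G m) :
    (T m μ A s h x) ^ (1 / 2 : ℝ)
      ≤ (MM m p : ℝ≥0∞) ^ (1 / 2 : ℝ) * T m μ A s (fun t => h t ^ (1 / 2 : ℝ)) x := by
  have hg : Dep m p (fun t => h t ^ (1 / 2 : ℝ)) := fun x y hxy => by simp only [hh x y hxy]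
  set g : G m → ℝ≥0∞ := fun t => h t ^ (1 / 2 : ℝ) with hgdef
  have hM0 : (MM m p : ℝ≥0∞) ≠ 0 := by exact_mod_cast (MM_pos hm p).ne'
  have hMt : (MM m p : ℝ≥0∞) ≠ ⊤ := ENNReal.natCast_ne_top _
  have h1 : ∀ t ∈ {t | rel m A s x t}, h t ≤ (MM m p * T m μ A s g x) * g t := by
    intro t ht
    have e : h t = g t * g t := by
      simp only [hgdef]
      rw [← ENNReal.rpow_add_of_nonneg _ _ (by norm_num) (by norm_num)]; norm_num
    have hle : g t * (MM m p : ℝ≥0∞)⁻¹ ≤ T m μ A s g x := by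
      rw [← lintegral_cyl hμ le_rfl hg t]
      unfold T
      apply lintegral_mono_set
      intro y hy j hj hjs
      rw [hy j (by omega)]
      exact ht j hj hjs
    rw [e]
    gcongr
    calc g t = MM m p * (g t * (MM m p : ℝ≥0∞)⁻¹) := by
          rw [mul_comm, mul_assoc, ENNReal.inv_mul_cancel hM0 hMt, mul_one]
      _ ≤ _ := by gcongr
  have h2 : T m μ A s h x ≤ MM m p * (T m μ A s g x * T m μ A s g x) := by
    calc T m μ A s h x ≤ ∫⁻ t in {t | rel m A s x t}, (MM m p * T m μ A s g x) * g t ∂μ :=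
          setLIntegral_mono' (rel_meas m A s x) h1
      _ = (MM m p * T m μ A s g x) * T m μ A s g x := by
          rw [lintegral_const_mul _ hg.measurable]; rfl
      _ = _ := by ring
  calc (T m μ A s h x) ^ (1 / 2 : ℝ) ≤ (MM m p * (T m μ A s g x * T m μ A s g x)) ^ (1 / 2 : ℝ) := by
        gcongr
    _ = _ := by
        rw [ENNReal.mul_rpow_of_nonneg _ _ (by norm_num), ENNReal.mul_rpow_of_nonneg _ _ (by norm_num),
          ← ENNReal.rpow_add_of_nonneg _ _ (by norm_num) (by norm_num)]
        norm_num

end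


/-! ### Main kernel estimates -/

theorem sum_MM_le {m : ℕ → ℕ} (hm : ∀ n, 2 ≤ m n) (A : ℕ) :
    ∑ s ∈ Finset.range (A + 1), (MM m s : ℝ≥0∞) ≤ 2 * MM m A := by
  have : ∑ s ∈ Finset.range (A + 1), MM m s ≤ 2 * MM m A := by
    induction A with
    | zero => simp [MM]
    | succ A ih => rw [Finset.sum_range_succ]; have := two_mul_MM_le hm A; omega
  exact_mod_cast this

theorem sum_sqrt_MM_le {m : ℕ → ℕ} (hm : ∀ n, 2 ≤ m n) (A : ℕ) :
    ∑ s ∈ Finset.range (A + 1), (MM m s : ℝ≥0∞) ^ (1 / 2 : ℝ) ≤ 4 * (MM m A : ℝ≥0∞) ^ (1 / 2 : ℝ) := by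
  induction A with
  | zero => simp [MM]
  | succ A ih =>
    rw [Finset.sum_range_succ]
    have h16 : (4 : ℝ≥0∞) = 16 ^ (1 / 2 : ℝ) := by
      rw [show (16 : ℝ≥0∞) = 4 ^ (2 : ℝ) by norm_num, ← ENNReal.rpow_mul]; norm_num
    have h9 : (3 : ℝ≥0∞) = 9 ^ (1 / 2 : ℝ) := by
      rw [show (9 : ℝ≥0∞) = 3 ^ (2 : ℝ) by norm_num, ← ENNReal.rpow_mul]; norm_num
    have h : 4 * (MM m A : ℝ≥0∞) ^ (1 / 2 : ℝ) ≤ 3 * (MM m (A + 1) : ℝ≥0∞) ^ (1 / 2 : ℝ) := by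
      rw [h16, h9, ← ENNReal.mul_rpow_of_nonneg _ _ (by norm_num),
        ← ENNReal.mul_rpow_of_nonneg _ _ (by norm_num)]
      have : 16 * MM m A ≤ 9 * MM m (A + 1) := by have := two_mul_MM_le hm A; omega
      have : (16 : ℝ≥0∞) * MM m A ≤ 9 * MM m (A + 1) := by exact_mod_cast this
      exact ENNReal.rpow_le_rpow this (by norm_num)
    calc _ ≤ 3 * (MM m (A + 1) : ℝ≥0∞) ^ (1 / 2 : ℝ) + (MM m (A + 1) : ℝ≥0∞) ^ (1 / 2 : ℝ) := by
          gcongr; exact ih.trans h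
      _ = _ := by ring

/-- One level of the majorant. -/
def V1 (m : ℕ → ℕ) (μ : Measure (G m)) (A : ℕ) (h : G m → ℝ≥0∞) (x : G m) : ℝ≥0∞ :=
  ∑ s ∈ Finset.range (A + 1), ((MM m s : ℝ≥0∞) * MM m A) * T m μ A s h x

/-- The majorant. -/
def VV (m : ℕ → ℕ) (μ : Measure (G m)) (p : ℕ) (h : G m → ℝ≥0∞) (x : G m) : ℝ≥0∞ :=
  ∑ A ∈ Finset.range (p + 1), V1 m μ A h x

section
variable {m : ℕ → ℕ} [∀ n, NeZero (m n)] {μ : Measure (G m)} [IsProbabilityMeasure μ]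

theorem V1_le
    (hμ : ∀ (n : ℕ) (x : G m), μ (cyl m n x) = ((MM m n : ℝ≥0∞))⁻¹) (hm : ∀ n, 2 ≤ m n)
    {B : ℕ} (hB : ∀ n, m n ≤ B) {p A : ℕ} (hpA : p ≤ A) {h : G m → ℝ≥0∞} (hh : Dep m p h) (x : G m) :
    (MM m p : ℝ≥0∞) * V1 m μ A h x ≤ (1 + 2 * B) * (MM m A * V1 m μ p h x) := by
  have hM0 : ∀ A, (MM m A : ℝ≥0∞) ≠ 0 := fun A => by exact_mod_cast (MM_pos hm A).ne'
  have hMt : ∀ A, (MM m A : ℝ≥0∞) ≠ ⊤ := fun A => ENNReal.natCast_ne_top _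
  have canc : ∀ A (y : ℝ≥0∞), MM m A * (y * (MM m A : ℝ≥0∞)⁻¹) = y := fun A y => by
    rw [mul_comm, mul_assoc, ENNReal.inv_mul_cancel (hM0 A) (hMt A), mul_one]
  have hB1 : (1 : ℝ≥0∞) ≤ B := by exact_mod_cast (le_trans (by norm_num) (hm 0)).trans (hB 0)
  have f1 : ∀ s < p, MM m A * T m μ A s h x = MM m p * T m μ p s h x := by
    intro s hs
    rw [T_eq_of_lt hμ hpA (by omega) hh, T_eq_of_lt hμ le_rfl hs hh, canc, canc]
  have f2 : ∀ s, p ≤ s → s ≤ A → MM m A * T m μ A s h x ≤ B * h x := by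
    intro s hs hsA
    rcases hsA.lt_or_eq with h1 | rfl
    · rw [T_eq_of_lt hμ hpA h1 hh, canc]
      have : ∀ c : ZMod (m s), h (Function.update x s c) = h x := by
        intro c
        refine hh _ _ fun j hj => ?_
        rw [Function.update_of_ne (by omega)]
      simp only [this, Finset.sum_const, Finset.card_univ, ZMod.card, nsmul_eq_mul]
      gcongr
      exact hB s
    · rw [T_eq_of_ge hμ hpA le_rfl hh, canc]
      exact le_mul_of_one_le_left (zero_le) hB1
  have f3 : MM m p * T m μ p p h x = h x := by
    rw [T_eq_of_ge hμ le_rfl le_rfl hh, canc]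
  have f4 : MM m p * h x ≤ V1 m μ p h x := by
    unfold V1
    rw [Finset.sum_range_succ, ← f3]
    rw [← mul_assoc]
    exact le_add_self
  have f5 : V1 m μ A h x ≤ V1 m μ p h x + 2 * B * (MM m A * h x) := by
    obtain ⟨k, rfl⟩ := Nat.exists_eq_add_of_le hpA
    conv_lhs => unfold V1
    rw [add_assoc, Finset.sum_range_add]
    gcongr ?_ + ?_
    · unfold V1
      rw [Finset.sum_range_succ]
      refine le_trans (le_of_eq ?_) le_self_add
      apply Finset.sum_congr rfl
      intro s hs
      have hs := Finset.mem_range.1 hs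
      rw [mul_assoc, f1 s hs, mul_assoc]
    · calc _ ≤ ∑ i ∈ Finset.range (k + 1), (MM m (p + i) : ℝ≥0∞) * (B * h x) := by
            apply Finset.sum_le_sum
            intro i hi
            have hi := Finset.mem_range.1 hi
            rw [mul_assoc]
            refine mul_le_mul_right ?_ _
            exact f2 _ (by omega) (by omega)
        _ = (∑ i ∈ Finset.range (k + 1), (MM m (p + i) : ℝ≥0∞)) * (B * h x) := by
            rw [Finset.sum_mul]
        _ ≤ (∑ i ∈ Finset.range (p + k + 1), (MM m i : ℝ≥0∞)) * (B * h x) := by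
            gcongr
            rw [add_assoc p k 1, Finset.sum_range_add _ p]
            exact le_add_self
        _ ≤ (2 * MM m (p + k)) * (B * h x) := by gcongr; exact sum_MM_le hm _
        _ = _ := by ring
  calc (MM m p : ℝ≥0∞) * V1 m μ A h x
      ≤ MM m p * (V1 m μ p h x + 2 * B * (MM m A * h x)) := by gcongr
    _ = MM m p * V1 m μ p h x + 2 * B * (MM m A * (MM m p * h x)) := by ring
    _ ≤ MM m A * V1 m μ p h x + 2 * B * (MM m A * V1 m μ p h x) := by
        gcongr
        exact MM_mono hm hpA
    _ = _ := by ring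

theorem sum_V1_le
    (hμ : ∀ (n : ℕ) (x : G m), μ (cyl m n x) = ((MM m n : ℝ≥0∞))⁻¹) (hm : ∀ n, 2 ≤ m n)
    {B : ℕ} (hB : ∀ n, m n ≤ B) {p q : ℕ} (hpq : p ≤ q) {h : G m → ℝ≥0∞} (hh : Dep m p h) (x : G m) :
    (MM m p : ℝ≥0∞) * ∑ A ∈ Finset.range (q + 1), V1 m μ A h x
      ≤ 2 * (1 + 2 * B) * (MM m q * VV m μ p h x) := by
  have hV : V1 m μ p h x ≤ VV m μ p h x := by
    unfold VV; rw [Finset.sum_range_succ]; exact le_add_self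
  induction q, hpq using Nat.le_induction with
  | base =>
    refine le_mul_of_one_le_left (zero_le) ?_
    have : 1 ≤ 2 * (1 + 2 * B) := by omega
    exact_mod_cast this
  | succ q hq ih =>
    rw [Finset.sum_range_succ, mul_add]
    have h2 : (2 : ℝ≥0∞) * MM m q ≤ MM m (q + 1) := by exact_mod_cast two_mul_MM_le hm q
    calc _ ≤ 2 * (1 + 2 * B) * (MM m q * VV m μ p h x)
          + (1 + 2 * B) * (MM m (q + 1) * V1 m μ p h x) :=
          add_le_add ih (V1_le hμ hm hB (by omega) hh x)
      _ = (1 + 2 * B) * ((2 * MM m q) * VV m μ p h x)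
          + (1 + 2 * B) * (MM m (q + 1) * V1 m μ p h x) := by ring
      _ ≤ (1 + 2 * B) * (MM m (q + 1) * VV m μ p h x)
          + (1 + 2 * B) * (MM m (q + 1) * VV m μ p h x) := by gcongr
      _ = _ := by ring

theorem rel_zero_sub {A s : ℕ} {x t : G m} : rel m A s 0 (x - t) ↔ rel m A s x t := by
  unfold rel
  simp only [Pi.sub_apply, Pi.zero_apply, sub_eq_zero]
  exact ⟨fun h j hj hs => (h j hj hs).symm, fun h j hj hs => (h j hj hs).symm⟩

theorem lintegral_W {A : ℕ} {h : G m → ℝ≥0∞} (hh : Measurable h) (x : G m) :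
    ∫⁻ t, h t * ENNReal.ofReal (W m A (x - t)) ∂μ = V1 m μ A h x := by
  classical
  have h1 : ∀ t, h t * ENNReal.ofReal (W m A (x - t))
      = ∑ s ∈ Finset.range (A + 1), ((MM m s : ℝ≥0∞) * MM m A) *
        {t | rel m A s x t}.indicator h t := by
    intro t
    unfold W
    rw [ENNReal.ofReal_sum_of_nonneg (fun s _ => by split_ifs <;> positivity), Finset.mul_sum]
    apply Finset.sum_congr rfl
    intro s _
    by_cases hr : rel m A s x t
    · rw [if_pos (rel_zero_sub.2 hr), Set.indicator_of_mem (show t ∈ {t | rel m A s x t} from hr),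
        ENNReal.ofReal_mul (by positivity), ENNReal.ofReal_natCast, ENNReal.ofReal_natCast]
      ring
    · rw [if_neg (fun h => hr (rel_zero_sub.1 h)),
        Set.indicator_of_notMem (show t ∉ {t | rel m A s x t} from hr)]
      simp
  simp only [h1]
  rw [lintegral_finsetSum]
  · unfold V1 T
    apply Finset.sum_congr rfl
    intro s _
    rw [lintegral_const_mul _ (hh.indicator (rel_meas m A s x)),
      lintegral_indicator (rel_meas m A s x)]
  · intro s _
    exact (hh.indicator (rel_meas m A s x)).const_mul _

theorem W_sub_meas (A : ℕ) (x : G m) : Measurable (fun t => W m A (x - t)) := by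
  apply Dep.measurable (n := A)
  intro s t hst
  have : ∀ k, rel m A k 0 (x - t) ↔ rel m A k 0 (x - s) := by
    intro k
    unfold rel
    simp only [Pi.sub_apply]
    exact ⟨fun h j hj hk => by rw [← h j hj hk, hst j hj], fun h j hj hk => by rw [← h j hj hk, hst j hj]⟩
  unfold W
  refine Finset.sum_congr rfl fun k _ => ?_
  by_cases hk : rel m A k 0 (x - s)
  · rw [if_pos hk, if_pos ((this k).2 hk)]
  · rw [if_neg hk, if_neg (fun h => hk ((this k).1 h))]

theorem Sg_le
    (hμ : ∀ (n : ℕ) (x : G m), μ (cyl m n x) = ((MM m n : ℝ≥0∞))⁻¹) (hm : ∀ n, 2 ≤ m n)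
    {B : ℕ} (hB : ∀ n, m n ≤ B) {p n : ℕ} (hn : MM m p ≤ n) {h : G m → ℝ≥0∞} (hh : Dep m p h)
    {u : G m → ℂ} (hu : ∀ t, ‖u t‖ₑ ≤ h t) (x : G m) :
    ‖(n : ℂ)⁻¹ * Sg m μ n u x‖ₑ ≤
      (3 * (B : ℝ≥0∞) ^ 3 * (2 * (1 + 2 * B))) * ((MM m p : ℝ≥0∞)⁻¹ * VV m μ p h x) := by
  have hn0 : 0 < n := (MM_pos hm p).trans_le hn
  obtain ⟨q, hq1, hq2⟩ : ∃ q, MM m q ≤ n ∧ n < MM m (q + 1) := by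
    have hex : ∃ q, n < MM m (q + 1) := ⟨n, (lt_MM hm n).trans_le (MM_mono hm (by omega))⟩
    classical
    refine ⟨Nat.find hex, ?_, Nat.find_spec hex⟩
    rcases Nat.eq_zero_or_pos (Nat.find hex) with h0 | h0
    · rw [h0]; exact hn0
    · have := Nat.find_min hex (m := Nat.find hex - 1) (by omega)
      rw [Nat.sub_add_cancel h0] at this
      omega
  have hpq : p ≤ q := by
    by_contra hlt
    have := MM_mono hm (show q + 1 ≤ p by omega)
    omega
  have hSg : ‖Sg m μ n u x‖ₑ ≤ 3 * (B : ℝ≥0∞) ^ 3 * ∑ A ∈ Finset.range (q + 1), V1 m μ A h x := by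
    unfold Sg
    refine (enorm_integral_le_lintegral_enorm _).trans ?_
    calc ∫⁻ t, ‖u t * Kc m n (x - t)‖ₑ ∂μ
        ≤ ∫⁻ t, 3 * (B : ℝ≥0∞) ^ 3 * ∑ A ∈ Finset.range (q + 1), h t * ENNReal.ofReal (W m A (x - t)) ∂μ := by
          apply lintegral_mono
          intro t
          have h1 := Kc_norm hm hB (q + 1) n hq2 (x - t)
          have h2 : ‖Kc m n (x - t)‖ₑ ≤ 3 * (B : ℝ≥0∞) ^ 3 *
              ∑ A ∈ Finset.range (q + 1), ENNReal.ofReal (W m A (x - t)) := by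
            rw [← ofReal_norm]
            refine (ENNReal.ofReal_le_ofReal h1).trans (le_of_eq ?_)
            rw [ENNReal.ofReal_mul (by positivity),
              ENNReal.ofReal_sum_of_nonneg (fun A _ => W_nonneg m A _),
              ENNReal.ofReal_mul (by positivity), ENNReal.ofReal_pow (by positivity)]
            simp
          calc ‖u t * Kc m n (x - t)‖ₑ = ‖u t‖ₑ * ‖Kc m n (x - t)‖ₑ := enorm_mul _ _
            _ ≤ h t * (3 * (B : ℝ≥0∞) ^ 3 *
              ∑ A ∈ Finset.range (q + 1), ENNReal.ofReal (W m A (x - t))) := mul_le_mul' (hu t) h2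
            _ = _ := by simp only [← Finset.mul_sum]; ring
      _ = _ := by
          have hmeas : ∀ A, Measurable fun t => h t * ENNReal.ofReal (W m A (x - t)) := fun A =>
            hh.measurable.mul (W_sub_meas A x).ennreal_ofReal
          rw [lintegral_const_mul _ (Finset.measurable_sum _ fun A _ => hmeas A),
            lintegral_finsetSum _ fun A _ => hmeas A]
          simp only [lintegral_W hh.measurable]
  have hM0 : (MM m p : ℝ≥0∞) ≠ 0 := by exact_mod_cast (MM_pos hm p).ne'
  have hMt : (MM m p : ℝ≥0∞) ≠ ⊤ := ENNReal.natCast_ne_top _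
  have hn0' : (n : ℝ≥0∞) ≠ 0 := by exact_mod_cast hn0.ne'
  have hnt : (n : ℝ≥0∞) ≠ ⊤ := ENNReal.natCast_ne_top _
  have hsum := sum_V1_le hμ hm hB hpq hh x
  have hninv : ‖(n : ℂ)⁻¹‖ₑ = (n : ℝ≥0∞)⁻¹ := by
    rw [enorm_inv (by exact_mod_cast hn0.ne')]
    congr 1
    rw [← ofReal_norm, Complex.norm_natCast, ENNReal.ofReal_natCast]
  rw [enorm_mul, hninv]
  set S := ∑ A ∈ Finset.range (q + 1), V1 m μ A h x
  calc (n : ℝ≥0∞)⁻¹ * ‖Sg m μ n u x‖ₑ ≤ (n : ℝ≥0∞)⁻¹ * (3 * (B : ℝ≥0∞) ^ 3 * S) := by gcongr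
    _ = (n : ℝ≥0∞)⁻¹ * (3 * (B : ℝ≥0∞) ^ 3 * (((MM m p : ℝ≥0∞)⁻¹ * MM m p) * S)) := by
        rw [ENNReal.inv_mul_cancel hM0 hMt, one_mul]
    _ = (n : ℝ≥0∞)⁻¹ * (3 * (B : ℝ≥0∞) ^ 3 * ((MM m p : ℝ≥0∞)⁻¹ * (MM m p * S))) := by ring
    _ ≤ (n : ℝ≥0∞)⁻¹ * (3 * (B : ℝ≥0∞) ^ 3 * ((MM m p : ℝ≥0∞)⁻¹ *
          (2 * (1 + 2 * B) * (n * VV m μ p h x)))) := by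
        have : 2 * (1 + 2 * (B : ℝ≥0∞)) * (MM m q * VV m μ p h x)
            ≤ 2 * (1 + 2 * B) * (n * VV m μ p h x) := by gcongr
        exact mul_le_mul_right (mul_le_mul_right (mul_le_mul_right (hsum.trans this) _) _) _
    _ = ((n : ℝ≥0∞)⁻¹ * n) * ((3 * (B : ℝ≥0∞) ^ 3 * (2 * (1 + 2 * B))) *
          ((MM m p : ℝ≥0∞)⁻¹ * VV m μ p h x)) := by ring
    _ = _ := by rw [ENNReal.inv_mul_cancel hn0' hnt, one_mul]

theorem sqrt_sum_le {ι : Type*} (s : Finset ι) (a : ι → ℝ≥0∞) :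
    (∑ i ∈ s, a i) ^ (1 / 2 : ℝ) ≤ ∑ i ∈ s, (a i) ^ (1 / 2 : ℝ) := by
  classical
  induction s using Finset.induction_on with
  | empty => simp
  | insert i s hi ih =>
    rw [Finset.sum_insert hi, Finset.sum_insert hi]
    refine (ENNReal.rpow_add_le_add_rpow _ _ (by norm_num) (by norm_num)).trans ?_
    gcongr

theorem VV_meas {p : ℕ} {h : G m → ℝ≥0∞} (hh : Measurable h) : Measurable (VV m μ p h) := by
  unfold VV V1
  exact Finset.measurable_sum _ fun A _ => Finset.measurable_sum _ fun s _ =>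
    (T_meas A s hh).const_mul _

theorem lintegral_sqrt_VV
    (hμ : ∀ (n : ℕ) (x : G m), μ (cyl m n x) = ((MM m n : ℝ≥0∞))⁻¹) (hm : ∀ n, 2 ≤ m n)
    {B : ℕ} (hB : ∀ n, m n ≤ B) {p : ℕ} {h : G m → ℝ≥0∞} (hh : Dep m p h) :
    ∫⁻ x, (VV m μ p h x) ^ (1 / 2 : ℝ) ∂μ ≤
      (4 * B) * ((p + 1 : ℕ) * (MM m p : ℝ≥0∞) ^ (1 / 2 : ℝ)) * ∫⁻ x, h x ^ (1 / 2 : ℝ) ∂μ := by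
  set J := ∫⁻ x, h x ^ (1 / 2 : ℝ) ∂μ with hJ
  have hg : Dep m p (fun t => h t ^ (1 / 2 : ℝ)) := fun x y hxy => by simp only [hh x y hxy]
  have hmeas : ∀ A s, Measurable (T m μ A s (fun t => h t ^ (1 / 2 : ℝ))) := fun A s =>
    T_meas A s hg.measurable
  have e1 : ∀ x, (VV m μ p h x) ^ (1 / 2 : ℝ) ≤ ∑ A ∈ Finset.range (p + 1), ∑ s ∈ Finset.range (A + 1),
      ((MM m s : ℝ≥0∞) ^ (1 / 2 : ℝ) * (MM m A : ℝ≥0∞) ^ (1 / 2 : ℝ) * (MM m p : ℝ≥0∞) ^ (1 / 2 : ℝ))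
        * T m μ A s (fun t => h t ^ (1 / 2 : ℝ)) x := by
    intro x
    unfold VV
    refine (sqrt_sum_le _ _).trans (Finset.sum_le_sum fun A hA => ?_)
    have hA := Finset.mem_range.1 hA
    unfold V1
    refine (sqrt_sum_le _ _).trans (Finset.sum_le_sum fun s hs => ?_)
    rw [ENNReal.mul_rpow_of_nonneg _ _ (by norm_num), ENNReal.mul_rpow_of_nonneg _ _ (by norm_num),
      mul_assoc _ ((MM m p : ℝ≥0∞) ^ (1 / 2 : ℝ))]
    gcongr
    exact T_sqrt hμ hm (by omega) hh x
  refine (lintegral_mono e1).trans ?_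
  rw [lintegral_finsetSum _ fun A _ => Finset.measurable_sum _ fun s _ => (hmeas A s).const_mul _]
  have e2 : ∀ A ∈ Finset.range (p + 1), ∫⁻ x, ∑ s ∈ Finset.range (A + 1),
      ((MM m s : ℝ≥0∞) ^ (1 / 2 : ℝ) * (MM m A : ℝ≥0∞) ^ (1 / 2 : ℝ) * (MM m p : ℝ≥0∞) ^ (1 / 2 : ℝ))
        * T m μ A s (fun t => h t ^ (1 / 2 : ℝ)) x ∂μ
      ≤ (4 * B) * (MM m p : ℝ≥0∞) ^ (1 / 2 : ℝ) * J := by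
    intro A _
    have hM0 : (MM m A : ℝ≥0∞) ≠ 0 := by exact_mod_cast (MM_pos hm A).ne'
    have hMt : (MM m A : ℝ≥0∞) ≠ ⊤ := ENNReal.natCast_ne_top _
    rw [lintegral_finsetSum _ fun s _ => (hmeas A s).const_mul _]
    calc _ ≤ ∑ s ∈ Finset.range (A + 1), (MM m s : ℝ≥0∞) ^ (1 / 2 : ℝ) *
          ((MM m A : ℝ≥0∞) ^ (1 / 2 : ℝ) * (MM m p : ℝ≥0∞) ^ (1 / 2 : ℝ) *
            (B * (MM m A : ℝ≥0∞)⁻¹ * J)) := by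
          apply Finset.sum_le_sum
          intro s _
          rw [lintegral_const_mul _ (hmeas A s), mul_assoc, mul_assoc, mul_assoc]
          gcongr
          exact lintegral_T_le hμ hB A s hg.measurable
      _ ≤ (4 * (MM m A : ℝ≥0∞) ^ (1 / 2 : ℝ)) *
          ((MM m A : ℝ≥0∞) ^ (1 / 2 : ℝ) * (MM m p : ℝ≥0∞) ^ (1 / 2 : ℝ) *
            (B * (MM m A : ℝ≥0∞)⁻¹ * J)) := by
          rw [← Finset.sum_mul]
          gcongr
          exact sum_sqrt_MM_le hm A
      _ = ((MM m A : ℝ≥0∞) ^ (1 / 2 : ℝ) * (MM m A : ℝ≥0∞) ^ (1 / 2 : ℝ) * (MM m A : ℝ≥0∞)⁻¹) *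
          ((4 * B) * (MM m p : ℝ≥0∞) ^ (1 / 2 : ℝ) * J) := by ring
      _ = _ := by
          rw [← ENNReal.rpow_add_of_nonneg _ _ (by norm_num) (by norm_num)]
          norm_num
          rw [ENNReal.mul_inv_cancel hM0 hMt, one_mul]
  refine (Finset.sum_le_sum e2).trans (le_of_eq ?_)
  rw [Finset.sum_const, Finset.card_range, nsmul_eq_mul]
  ring

end


/-! ### The stopping-time decomposition -/

/-- The largest modulus of `f (n + 1)` on the interval `I_n(x)`. -/
def lam (m : ℕ → ℕ) (f : ℕ → G m → ℂ) (n : ℕ) (x : G m) : ℝ≥0∞ :=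
  ⨆ c : ZMod (m n), ‖f (n + 1) (Function.update x n c)‖ₑ

open Classical in
/-- The last stopping level not exceeding `n`. -/
def pp (m : ℕ → ℕ) (f : ℕ → G m → ℂ) : ℕ → G m → ℕ
  | 0, _ => 0
  | n + 1, x => if 4 * lam m f (pp m f n x) x < lam m f (n + 1) x then n + 1 else pp m f n x

/-- The size of the atom at level `p`. -/
def hh (m : ℕ → ℕ) (f : ℕ → G m → ℂ) (p : ℕ) (x : G m) : ℝ≥0∞ :=
  if pp m f p x = p then 9 * lam m f p x else 0

open Classical in
/-- The part of `hh` living on the maximizing children. -/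
def gg (m : ℕ → ℕ) (f : ℕ → G m → ℂ) (p : ℕ) (x : G m) : ℝ≥0∞ :=
  if pp m f p x = p ∧ ‖f (p + 1) x‖ₑ = lam m f p x then lam m f p x ^ (1 / 2 : ℝ) else 0

/-- The (sum of all) atoms at level `p`, truncated at `N`. -/
def atom (m : ℕ → ℕ) (f : ℕ → G m → ℂ) (N p : ℕ) (x : G m) : ℂ :=
  ∑ k ∈ Finset.range N, if pp m f k x = p then f (k + 1) x - f k x else 0

section
variable {m : ℕ → ℕ} {f : ℕ → G m → ℂ}

theorem lam_dep (hd : ∀ n, Dep m n (f n)) (n : ℕ) : Dep m n (lam m f n) := by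
  intro x y hxy
  unfold lam
  congr 1
  funext c
  congr 1
  refine hd (n + 1) _ _ fun j hj => ?_
  by_cases h : j = n
  · subst h; simp
  · rw [Function.update_of_ne h, Function.update_of_ne h]; exact hxy j (by omega)

theorem pp_le (n : ℕ) (x : G m) : pp m f n x ≤ n := by
  induction n with
  | zero => simp [pp]
  | succ n ih => unfold pp; split_ifs <;> omega

theorem pp_dep (hd : ∀ n, Dep m n (f n)) (n : ℕ) : Dep m n (pp m f n) := by
  induction n with
  | zero => intro x y _; rfl
  | succ n ih =>
    intro x y hxy
    have h1 : pp m f n y = pp m f n x := ih x y fun j hj => hxy j (by omega)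
    have h2 : lam m f (pp m f n x) y = lam m f (pp m f n x) x :=
      ((lam_dep hd _).mono ((pp_le n x).trans (Nat.le_succ n))) x y hxy
    have h3 : lam m f (n + 1) y = lam m f (n + 1) x := lam_dep hd _ x y hxy
    simp only [pp, h1, h2, h3]

theorem hh_dep (hd : ∀ n, Dep m n (f n)) (p : ℕ) : Dep m p (hh m f p) := by
  intro x y hxy
  simp only [hh, pp_dep hd p x y hxy, lam_dep hd p x y hxy]

theorem gg_dep (hd : ∀ n, Dep m n (f n)) (p : ℕ) : Dep m (p + 1) (gg m f p) := by
  intro x y hxy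
  simp only [gg, (pp_dep hd p).mono (Nat.le_succ p) x y hxy,
    (lam_dep hd p).mono (Nat.le_succ p) x y hxy, hd (p + 1) x y hxy]

theorem atom_dep (hd : ∀ n, Dep m n (f n)) (N p : ℕ) : Dep m N (atom m f N p) := by
  intro x y hxy
  unfold atom
  apply Finset.sum_congr rfl
  intro k hk
  have hk := Finset.mem_range.1 hk
  rw [(pp_dep hd k).mono hk.le x y hxy, (hd k).mono hk.le x y hxy, (hd (k + 1)).mono hk x y hxy]

theorem norm_le_lam_succ (n : ℕ) (x : G m) : ‖f (n + 1) x‖ₑ ≤ lam m f n x := by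
  unfold lam
  refine le_trans (le_of_eq ?_) (le_iSup _ (x n))
  rw [Function.update_eq_self]

theorem lam_le (n : ℕ) (x : G m) : lam m f n x ≤ 4 * lam m f (pp m f n x) x := by
  have h14 : ∀ a : ℝ≥0∞, a ≤ 4 * a := fun a => le_mul_of_one_le_left (zero_le) (by norm_num)
  cases n with
  | zero => exact h14 _
  | succ n =>
    by_cases h : 4 * lam m f (pp m f n x) x < lam m f (n + 1) x
    · have : pp m f (n + 1) x = n + 1 := by unfold pp; rw [if_pos h]
      rw [this]; exact h14 _
    · have : pp m f (n + 1) x = pp m f n x := by conv_lhs => unfold pp; rw [if_neg h]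
      rw [this]; exact not_lt.1 h

theorem pp_self {k p : ℕ} {x : G m} (h : pp m f k x = p) : pp m f p x = p := by
  induction k with
  | zero => have : p = 0 := h.symm
            subst this; rfl
  | succ k ih =>
    by_cases h1 : pp m f k x = p
    · exact ih h1
    · have h2 := h
      unfold pp at h2
      split_ifs at h2
      · rw [← h2] at h ⊢; exact h
      · exact absurd h2 h1

theorem sum_atom (N : ℕ) (x : G m) : f N x = f 0 x + ∑ p ∈ Finset.range N, atom m f N p x := by
  unfold atom
  rw [Finset.sum_comm]
  have : ∀ k ∈ Finset.range N, (∑ p ∈ Finset.range N, if pp m f k x = p then f (k + 1) x - f k x else 0)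
      = f (k + 1) x - f k x := by
    intro k hk
    have hk := Finset.mem_range.1 hk
    rw [Finset.sum_ite_eq, if_pos]
    exact Finset.mem_range.2 ((pp_le k x).trans_lt hk)
  rw [Finset.sum_congr rfl this, Finset.sum_range_sub (fun k => f k x)]
  ring

theorem atom_bound (hlam : ∀ n x, ‖f n x‖ₑ ≤ lam m f n x) (N p : ℕ) (x : G m) :
    ‖atom m f N p x‖ₑ ≤ hh m f p x := by
  by_cases hp : pp m f p x = p
  · have h14 : ∀ a : ℝ≥0∞, a ≤ 4 * a := fun a => le_mul_of_one_le_left (zero_le) (by norm_num)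
    have hzero : atom m f p p x = 0 := by
      apply Finset.sum_eq_zero
      intro k hk
      have hk := Finset.mem_range.1 hk
      rw [if_neg]
      have := pp_le (f := f) k x
      omega
    have key : ∀ N, p ≤ N → (pp m f N x = p → atom m f N p x = f N x - f p x) ∧
        ‖atom m f N p x + f p x‖ₑ ≤ 4 * lam m f p x := by
      intro N hN
      induction N, hN using Nat.le_induction with
      | base =>
        refine ⟨fun _ => by rw [hzero, sub_self], ?_⟩
        rw [hzero, zero_add]
        exact (hlam p x).trans (h14 _)
      | succ N hN ih =>
        have hs : atom m f (N + 1) p x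
            = atom m f N p x + if pp m f N x = p then f (N + 1) x - f N x else 0 := by
          unfold atom; rw [Finset.sum_range_succ]
        by_cases h1 : pp m f N x = p
        · rw [if_pos h1, ih.1 h1] at hs
          have hs' : atom m f (N + 1) p x = f (N + 1) x - f p x := by rw [hs]; ring
          refine ⟨fun _ => hs', ?_⟩
          rw [hs', sub_add_cancel]
          refine (norm_le_lam_succ N x).trans ?_
          have := lam_le (f := f) N x
          rwa [h1] at this
        · rw [if_neg h1, add_zero] at hs
          rw [hs]
          refine ⟨fun h2 => ?_, ih.2⟩
          exfalso
          unfold pp at h2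
          split_ifs at h2
          · omega
          · exact h1 h2
    unfold hh
    rw [if_pos hp]
    rcases le_total p N with hN | hN
    · calc ‖atom m f N p x‖ₑ = ‖(atom m f N p x + f p x) - f p x‖ₑ := by rw [add_sub_cancel_right]
        _ ≤ ‖atom m f N p x + f p x‖ₑ + ‖f p x‖ₑ := enorm_sub_le
        _ ≤ 4 * lam m f p x + 4 * lam m f p x :=
            add_le_add (key N hN).2 ((hlam p x).trans (h14 _))
        _ = 8 * lam m f p x := by ring
        _ ≤ _ := by gcongr; norm_num
    · have : atom m f N p x = 0 := by
        apply Finset.sum_eq_zero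
        intro k hk
        have hk := Finset.mem_range.1 hk
        rw [if_neg]
        have := pp_le (f := f) k x
        omega
      rw [this]; simp
  · have : atom m f N p x = 0 := by
      apply Finset.sum_eq_zero
      intro k _
      rw [if_neg]
      exact fun h => hp (pp_self h)
    rw [this]; simp

theorem sum_sel_le (n : ℕ) (x : G m) :
    ∑ p ∈ Finset.range (n + 1), (if pp m f p x = p then lam m f p x ^ (1 / 2 : ℝ) else 0)
      ≤ 2 * lam m f (pp m f n x) x ^ (1 / 2 : ℝ) := by
  have h12 : ∀ a : ℝ≥0∞, a ≤ 2 * a := fun a => le_mul_of_one_le_left (zero_le) (by norm_num)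
  induction n with
  | zero => simpa [pp] using h12 _
  | succ n ih =>
    rw [Finset.sum_range_succ]
    by_cases h : 4 * lam m f (pp m f n x) x < lam m f (n + 1) x
    · have h1 : pp m f (n + 1) x = n + 1 := by unfold pp; rw [if_pos h]
      rw [h1, if_pos rfl, two_mul]
      gcongr
      refine ih.trans ?_
      have h4 : (2 : ℝ≥0∞) = 4 ^ (1 / 2 : ℝ) := by
        rw [show (4 : ℝ≥0∞) = 2 ^ (2 : ℝ) by norm_num, ← ENNReal.rpow_mul]; norm_num
      rw [h4, ← ENNReal.mul_rpow_of_nonneg _ _ (by norm_num)]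
      exact ENNReal.rpow_le_rpow h.le (by norm_num)
    · have h1 : pp m f (n + 1) x = pp m f n x := by conv_lhs => unfold pp; rw [if_neg h]
      rw [h1, if_neg, add_zero]
      · exact ih
      · have := pp_le (f := f) n x
        omega

theorem sum_gg_le (n : ℕ) (x : G m) :
    ∑ p ∈ Finset.range n, gg m f p x ≤ 2 * (⨆ k, ‖f k x‖ₑ) ^ (1 / 2 : ℝ) := by
  induction n with
  | zero => simp
  | succ n ih =>
    by_cases h : pp m f n x = n ∧ ‖f (n + 1) x‖ₑ = lam m f n x
    · calc ∑ p ∈ Finset.range (n + 1), gg m f p x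
          ≤ ∑ p ∈ Finset.range (n + 1), (if pp m f p x = p then lam m f p x ^ (1 / 2 : ℝ) else 0) := by
            apply Finset.sum_le_sum
            intro p _
            unfold gg
            by_cases h1 : pp m f p x = p
            · rw [if_pos h1]; split_ifs
              · exact le_rfl
              · exact zero_le
            · rw [if_neg h1, if_neg (fun h2 => h1 h2.1)]
        _ ≤ 2 * lam m f (pp m f n x) x ^ (1 / 2 : ℝ) := sum_sel_le n x
        _ = 2 * ‖f (n + 1) x‖ₑ ^ (1 / 2 : ℝ) := by rw [h.1, h.2]
        _ ≤ _ := by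
            gcongr
            exact le_iSup (fun k => ‖f k x‖ₑ) (n + 1)
    · rw [Finset.sum_range_succ]
      have : gg m f n x = 0 := by unfold gg; rw [if_neg h]
      rw [this, add_zero]; exact ih

variable [∀ n, NeZero (m n)] {μ : Measure (G m)} [IsProbabilityMeasure μ]

theorem norm_le_lam (hμ : ∀ (n : ℕ) (x : G m), μ (cyl m n x) = ((MM m n : ℝ≥0∞))⁻¹)
    (hm : ∀ n, 2 ≤ m n) (hf : IsMartingale m μ f) (n : ℕ) (x : G m) :
    ‖f n x‖ₑ ≤ lam m f n x := by
  have hd : ∀ n, Dep m n (f n) := fun n => dep_of_filt (hf.2.1 n)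
  have hM0 : (MM m n : ℝ≥0∞)⁻¹ ≠ 0 := ENNReal.inv_ne_zero.2 (ENNReal.natCast_ne_top _)
  have hMt : (MM m n : ℝ≥0∞)⁻¹ ≠ ⊤ := ENNReal.inv_ne_top.2 (by exact_mod_cast (MM_pos hm n).ne')
  have h1 : ‖∫ t in cyl m n x, f n t ∂μ‖ₑ = ‖f n x‖ₑ * (MM m n : ℝ≥0∞)⁻¹ := by
    rw [setIntegral_congr_fun (g := fun _ => f n x) (cyl_meas m n x) (fun t ht => hd n x t ht),
      setIntegral_const, enorm_smul, mul_comm, Measure.real, hμ]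
    congr 1
    rw [← ofReal_norm, Real.norm_of_nonneg ENNReal.toReal_nonneg, ENNReal.ofReal_toReal hMt]
  have h2 : ‖∫ t in cyl m n x, f (n + 1) t ∂μ‖ₑ ≤ lam m f n x * (MM m n : ℝ≥0∞)⁻¹ := by
    refine (enorm_integral_le_lintegral_enorm _).trans ?_
    rw [← lintegral_cyl hμ le_rfl (lam_dep hd n) x]
    exact lintegral_mono fun t => norm_le_lam_succ n t
  rw [hf.2.2 n _ (cyl_filt m n x), h1] at h2
  exact (ENNReal.mul_le_mul_iff_left hM0 hMt).1 h2

theorem Sg_atom_zero (hm : ∀ n, 2 ≤ m n) (hf : IsMartingale m μ f) {n N p : ℕ} (hn : n ≤ MM m p)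
    (x : G m) : Sg m μ n (atom m f N p) x = 0 := by
  have hd : ∀ n, Dep m n (f n) := fun n => dep_of_filt (hf.2.1 n)
  have hud : ∀ k, p ≤ k → Dep m k (fun t => if pp m f k t = p then Kc m n (x - t) else 0) := by
    intro k hk s t hst
    simp only [pp_dep hd k s t hst, (Kc_sub_dep hm hn x).mono hk s t hst]
  have e : ∀ k t, (if pp m f k t = p then f (k + 1) t - f k t else 0) * Kc m n (x - t)
      = f (k + 1) t * (if pp m f k t = p then Kc m n (x - t) else 0)
        - f k t * (if pp m f k t = p then Kc m n (x - t) else 0) := by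
    intro k t; split_ifs <;> ring
  have hInt : ∀ k, p ≤ k → ∀ j, j ≤ k + 1 → Integrable
      (fun t => f j t * (if pp m f k t = p then Kc m n (x - t) else 0)) μ := by
    intro k hk j hj
    apply Dep.integrable (n := k + 1)
    intro s t hst
    have h1 := (hud k hk).mono (Nat.le_succ k) s t hst
    have h2 := (hd j).mono hj s t hst
    simp only [h1, h2]
  have hz : ∀ k, k < p → ∀ t, (if pp m f k t = p then f (k + 1) t - f k t else 0) * Kc m n (x - t) = 0 := by
    intro k hk t
    rw [if_neg, zero_mul]
    have := pp_le (f := f) k t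
    omega
  unfold Sg atom
  simp only [Finset.sum_mul]
  rw [integral_finsetSum]
  · apply Finset.sum_eq_zero
    intro k _
    rcases lt_or_ge k p with hk | hk
    · simp only [hz k hk, integral_zero]
    · simp only [e]
      rw [integral_sub (hInt k hk _ le_rfl) (hInt k hk _ (Nat.le_succ k)), mart_pair hf (hud k hk), sub_self]
  · intro k _
    rcases lt_or_ge k p with hk | hk
    · simp only [hz k hk]; exact integrable_zero _ _ _
    · simp only [e]
      exact (hInt k hk _ le_rfl).sub (hInt k hk _ (Nat.le_succ k))

theorem Sg_decomp (hm : ∀ n, 2 ≤ m n) (hf : IsMartingale m μ f) {n N : ℕ} (hn : n ≤ MM m N)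
    (x : G m) : Sg m μ n (f N) x = Sg m μ n (f 0) x + ∑ p ∈ Finset.range N, Sg m μ n (atom m f N p) x := by
  have hd : ∀ n, Dep m n (f n) := fun n => dep_of_filt (hf.2.1 n)
  have hInt : ∀ u : G m → ℂ, Dep m N u → Integrable (fun t => u t * Kc m n (x - t)) μ := by
    intro u hu
    apply Dep.integrable (n := N)
    intro s t hst
    have := Kc_sub_dep hm hn x s t hst
    simp only at this
    simp only [this, hu s t hst]
  unfold Sg
  rw [← integral_finsetSum, ← integral_add]
  · congr 1
    funext t
    rw [sum_atom (f := f) N t, add_mul, Finset.sum_mul]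
  · exact hInt _ ((hd 0).mono (Nat.zero_le N))
  · exact integrable_finsetSum _ fun p _ => hInt _ (atom_dep hd N p)
  · exact fun p _ => hInt _ (atom_dep hd N p)

theorem lintegral_hh_le (hμ : ∀ (n : ℕ) (x : G m), μ (cyl m n x) = ((MM m n : ℝ≥0∞))⁻¹)
    (hm : ∀ n, 2 ≤ m n) {B : ℕ} (hB : ∀ n, m n ≤ B) (hd : ∀ n, Dep m n (f n)) (p : ℕ) :
    ∫⁻ x, hh m f p x ^ (1 / 2 : ℝ) ∂μ ≤ 3 * B ^ 2 * ∫⁻ x, gg m f p x ∂μ := by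
  have hM0 : ∀ A, (MM m A : ℝ≥0∞) ≠ 0 := fun A => by exact_mod_cast (MM_pos hm A).ne'
  have hMt : ∀ A, (MM m A : ℝ≥0∞) ≠ ⊤ := fun A => ENNReal.natCast_ne_top _
  have h9 : (3 : ℝ≥0∞) = 9 ^ (1 / 2 : ℝ) := by
    rw [show (9 : ℝ≥0∞) = 3 ^ (2 : ℝ) by norm_num, ← ENNReal.rpow_mul]; norm_num
  have key : ∀ x, hh m f p x ^ (1 / 2 : ℝ) ≤ 3 * MM m (p + 1) * T m μ p p (gg m f p) x := by
    intro x
    by_cases hp : pp m f p x = p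
    · obtain ⟨c, hc⟩ := exists_eq_ciSup_of_finite
        (f := fun c : ZMod (m p) => ‖f (p + 1) (Function.update x p c)‖ₑ)
      set y := Function.update x p c with hy
      have hyx : ∀ j < p, y j = x j := fun j hj => by rw [hy, Function.update_of_ne hj.ne]
      have hl : lam m f p y = lam m f p x := lam_dep hd p x y hyx
      have hg : gg m f p y = lam m f p x ^ (1 / 2 : ℝ) := by
        unfold gg
        rw [if_pos, hl]
        refine ⟨by rw [pp_dep hd p x y hyx, hp], ?_⟩
        rw [hl]; exact hc
      have hT : lam m f p x ^ (1 / 2 : ℝ) * (MM m (p + 1) : ℝ≥0∞)⁻¹ ≤ T m μ p p (gg m f p) x := by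
        rw [← hg, ← lintegral_cyl hμ le_rfl (gg_dep hd p) y]
        unfold T
        apply lintegral_mono_set
        intro t ht j hj _
        rw [ht j (by omega), hyx j hj]
      unfold hh
      rw [if_pos hp, ENNReal.mul_rpow_of_nonneg _ _ (by norm_num), ← h9, mul_assoc]
      gcongr
      calc lam m f p x ^ (1 / 2 : ℝ)
          = MM m (p + 1) * (lam m f p x ^ (1 / 2 : ℝ) * (MM m (p + 1) : ℝ≥0∞)⁻¹) := by
            rw [mul_comm, mul_assoc, ENNReal.inv_mul_cancel (hM0 _) (hMt _), mul_one]
        _ ≤ _ := by gcongr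
    · unfold hh
      rw [if_neg hp, ENNReal.zero_rpow_of_pos (by norm_num)]
      exact zero_le
  refine (lintegral_mono key).trans ?_
  have hgm := (gg_dep hd p).measurable
  rw [lintegral_const_mul _ (T_meas p p hgm)]
  calc _ ≤ 3 * (MM m (p + 1) : ℝ≥0∞) * (B * (MM m p : ℝ≥0∞)⁻¹ * ∫⁻ t, gg m f p t ∂μ) := by
        gcongr
        exact lintegral_T_le hμ hB p p hgm
    _ = (MM m p * (MM m p : ℝ≥0∞)⁻¹) * (3 * (B * m p) * ∫⁻ t, gg m f p t ∂μ) := by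
        simp only [MM]; push_cast; ring
    _ = 3 * (B * m p) * ∫⁻ t, gg m f p t ∂μ := by
        rw [ENNReal.mul_inv_cancel (hM0 p) (hMt p), one_mul]
    _ ≤ 3 * (B * B) * ∫⁻ t, gg m f p t ∂μ := by
        gcongr
        exact hB p
    _ = _ := by ring

end


/-! ### The maximal inequality -/

/-- The constant in the pointwise estimate. -/
def Ck (B : ℕ) : ℝ≥0∞ := 3 * (B : ℝ≥0∞) ^ 3 * (2 * (1 + 2 * B))

theorem Ck_ne_top (B : ℕ) : Ck B ≠ ⊤ := by
  have : Ck B = ((3 * B ^ 3 * (2 * (1 + 2 * B)) : ℕ) : ℝ≥0∞) := by unfold Ck; push_cast; ring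
  rw [this]; exact ENNReal.natCast_ne_top _

/-- The majorant at level `p`. -/
def YY (m : ℕ → ℕ) (μ : Measure (G m)) (B : ℕ) (f : ℕ → G m → ℂ) (p : ℕ) (x : G m) : ℝ≥0∞ :=
  (32 * Ck B) ^ (1 / 2 : ℝ) * (((p + 1 : ℕ) : ℝ≥0∞)⁻¹ * ((MM m p : ℝ≥0∞)⁻¹ ^ (1 / 2 : ℝ))) *
    VV m μ p (hh m f p) x ^ (1 / 2 : ℝ)

theorem log_bound {m : ℕ → ℕ} (hm : ∀ n, 2 ≤ m n) {n p : ℕ} (h : MM m p ≤ n) :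
    ((p + 1 : ℕ) : ℝ) ^ 2 / 16 ≤ Real.log (n + 1) ^ 2 := by
  have h1 : (2 : ℝ) ^ p ≤ n := by exact_mod_cast (two_pow_le_MM hm p).trans h
  have h0 : (1 : ℝ) ≤ n := le_trans (one_le_pow₀ (by norm_num)) h1
  have h2 : (2 : ℝ) ^ (p + 1) ≤ (n + 1) ^ 2 := by rw [pow_succ]; nlinarith
  have h3 := Real.log_le_log (by positivity) h2
  rw [Real.log_pow, Real.log_pow] at h3
  have h4 := Real.log_two_gt_d9
  have h5 : (0 : ℝ) ≤ ((p + 1 : ℕ) : ℝ) := by positivity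
  have h6 : ((p + 1 : ℕ) : ℝ) / 4 ≤ Real.log (n + 1) := by
    push_cast at h3 h5 ⊢
    nlinarith
  calc ((p + 1 : ℕ) : ℝ) ^ 2 / 16 = (((p + 1 : ℕ) : ℝ) / 4) ^ 2 := by ring
    _ ≤ _ := pow_le_pow_left₀ (by positivity) h6 2

section
variable {m : ℕ → ℕ} {f : ℕ → G m → ℂ} [∀ n, NeZero (m n)] {μ : Measure (G m)}
  [IsProbabilityMeasure μ]

theorem fej_le (hμ : ∀ (n : ℕ) (x : G m), μ (cyl m n x) = ((MM m n : ℝ≥0∞))⁻¹)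
    (hm : ∀ n, 2 ≤ m n) {B : ℕ} (hB : ∀ n, m n ≤ B) (hf : IsMartingale m μ f)
    {n : ℕ} (hn : 1 ≤ n) (x : G m) :
    ‖mFej m μ f n x‖ₑ ≤ ∑ p ∈ Finset.range (n + 1), if MM m p ≤ n then
      2 * (Ck B * ((MM m p : ℝ≥0∞)⁻¹ * VV m μ p (hh m f p) x)) else 0 := by
  have hd : ∀ n, Dep m n (f n) := fun n => dep_of_filt (hf.2.1 n)
  have hlam := norm_le_lam hμ hm hf
  have hM0 : MM m 0 ≤ n := hn
  have hN : n ≤ MM m (n + 1) := (Nat.le_succ n).trans (lt_MM hm (n + 1)).le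
  rw [mFej_eq hm hf hN, Sg_decomp hm hf hN, mul_add, Finset.mul_sum]
  set r : ℕ → ℝ≥0∞ := fun p => Ck B * ((MM m p : ℝ≥0∞)⁻¹ * VV m μ p (hh m f p) x) with hr
  have h0 : ‖(n : ℂ)⁻¹ * Sg m μ n (f 0) x‖ₑ ≤ r 0 := by
    refine Sg_le hμ hm hB hM0 (hh_dep hd 0) (fun t => ?_) x
    refine (hlam 0 t).trans ?_
    have : hh m f 0 t = 9 * lam m f 0 t := by unfold hh; exact if_pos rfl
    rw [this]
    exact le_mul_of_one_le_left zero_le (by norm_num)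
  have h1 : ∀ p, ‖(n : ℂ)⁻¹ * Sg m μ n (atom m f (n + 1) p) x‖ₑ ≤ if MM m p ≤ n then r p else 0 := by
    intro p
    split_ifs with h
    · exact Sg_le hμ hm hB h (hh_dep hd p) (fun t => atom_bound hlam _ p t) x
    · rw [Sg_atom_zero hm hf (not_le.1 h).le]; simp
  have h2 : r 0 ≤ ∑ p ∈ Finset.range (n + 1), if MM m p ≤ n then r p else 0 := by
    have := Finset.single_le_sum (f := fun p => if MM m p ≤ n then r p else 0)
      (fun _ _ => zero_le) (Finset.mem_range.2 (Nat.succ_pos n))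
    simpa only [if_pos hM0] using this
  calc _ ≤ ‖(n : ℂ)⁻¹ * Sg m μ n (f 0) x‖ₑ
        + ‖∑ p ∈ Finset.range (n + 1), (n : ℂ)⁻¹ * Sg m μ n (atom m f (n + 1) p) x‖ₑ :=
        enorm_add_le _ _
    _ ≤ (∑ p ∈ Finset.range (n + 1), if MM m p ≤ n then r p else 0)
        + ∑ p ∈ Finset.range (n + 1), if MM m p ≤ n then r p else 0 :=
        add_le_add (h0.trans h2) ((enorm_sum_le _ _).trans (Finset.sum_le_sum fun p _ => h1 p))
    _ = 2 * ∑ p ∈ Finset.range (n + 1), if MM m p ≤ n then r p else 0 := by rw [two_mul]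
    _ = _ := by
        rw [Finset.mul_sum]
        apply Finset.sum_congr rfl
        intro p _
        split_ifs <;> simp [hr]

theorem fej_sqrt (hμ : ∀ (n : ℕ) (x : G m), μ (cyl m n x) = ((MM m n : ℝ≥0∞))⁻¹)
    (hm : ∀ n, 2 ≤ m n) {B : ℕ} (hB : ∀ n, m n ≤ B) (hf : IsMartingale m μ f)
    (n : ℕ) (x : G m) :
    (‖mFej m μ f n x‖ₑ / ENNReal.ofReal (Real.log (n + 1) ^ 2)) ^ (1 / 2 : ℝ)
      ≤ ∑' p, YY m μ B f p x := by
  rcases Nat.eq_zero_or_pos n with rfl | hn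
  · simp [mFej]
  set L := ENNReal.ofReal (Real.log (n + 1) ^ 2) with hL
  have h1 : ‖mFej m μ f n x‖ₑ / L ≤ ∑ p ∈ Finset.range (n + 1), YY m μ B f p x ^ (2 : ℝ) := by
    rw [div_eq_mul_inv]
    refine (mul_le_mul_left (fej_le hμ hm hB hf hn x) _).trans ?_
    rw [Finset.sum_mul]
    apply Finset.sum_le_sum
    intro p _
    split_ifs with h
    · have hLp : L⁻¹ ≤ 16 * (((p + 1 : ℕ) : ℝ≥0∞)⁻¹) ^ 2 := by
        have e1 : ENNReal.ofReal (((p + 1 : ℕ) : ℝ) ^ 2 / 16) ≤ L :=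
          ENNReal.ofReal_le_ofReal (log_bound hm h)
        have e2 := ENNReal.inv_le_inv.2 e1
        refine e2.trans (le_of_eq ?_)
        rw [ENNReal.ofReal_div_of_pos (by norm_num), ENNReal.ofReal_pow (by positivity),
          ENNReal.ofReal_natCast, ENNReal.inv_div (Or.inl (by simp)) (Or.inl (by simp)),
          div_eq_mul_inv, ENNReal.inv_pow]
        simp
      have e3 : ∀ a : ℝ≥0∞, (a ^ (1 / 2 : ℝ)) ^ (2 : ℝ) = a := by
        intro a; rw [← ENNReal.rpow_mul]; norm_num
      have e4 : YY m μ B f p x ^ (2 : ℝ) = 32 * Ck B * ((((p + 1 : ℕ) : ℝ≥0∞)⁻¹) ^ 2 *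
          (MM m p : ℝ≥0∞)⁻¹) * VV m μ p (hh m f p) x := by
        unfold YY
        rw [ENNReal.mul_rpow_of_nonneg _ _ (by norm_num), ENNReal.mul_rpow_of_nonneg _ _ (by norm_num),
          e3, e3, ENNReal.mul_rpow_of_nonneg _ _ (by norm_num), e3, ENNReal.rpow_two]
      rw [e4]
      calc _ ≤ 2 * (Ck B * ((MM m p : ℝ≥0∞)⁻¹ * VV m μ p (hh m f p) x))
            * (16 * (((p + 1 : ℕ) : ℝ≥0∞)⁻¹) ^ 2) := by gcongr
        _ = _ := by ring
    · rw [zero_mul]; exact zero_le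
  calc _ ≤ (∑ p ∈ Finset.range (n + 1), YY m μ B f p x ^ (2 : ℝ)) ^ (1 / 2 : ℝ) :=
        ENNReal.rpow_le_rpow h1 (by norm_num)
    _ ≤ ∑ p ∈ Finset.range (n + 1), (YY m μ B f p x ^ (2 : ℝ)) ^ (1 / 2 : ℝ) := sqrt_sum_le _ _
    _ = ∑ p ∈ Finset.range (n + 1), YY m μ B f p x := by
        apply Finset.sum_congr rfl
        intro p _
        rw [← ENNReal.rpow_mul]; norm_num
    _ ≤ _ := ENNReal.sum_le_tsum _

theorem lintegral_YY (hμ : ∀ (n : ℕ) (x : G m), μ (cyl m n x) = ((MM m n : ℝ≥0∞))⁻¹)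
    (hm : ∀ n, 2 ≤ m n) {B : ℕ} (hB : ∀ n, m n ≤ B) (hf : IsMartingale m μ f) (p : ℕ) :
    ∫⁻ x, YY m μ B f p x ∂μ
      ≤ (32 * Ck B) ^ (1 / 2 : ℝ) * (4 * B) * (3 * B ^ 2) * ∫⁻ x, gg m f p x ∂μ := by
  have hd : ∀ n, Dep m n (f n) := fun n => dep_of_filt (hf.2.1 n)
  have hhm := (hh_dep hd p).measurable
  have hM0 : (MM m p : ℝ≥0∞) ≠ 0 := by exact_mod_cast (MM_pos hm p).ne'
  have hMt : (MM m p : ℝ≥0∞) ≠ ⊤ := ENNReal.natCast_ne_top _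
  have c1 : ((p + 1 : ℕ) : ℝ≥0∞)⁻¹ * ((p + 1 : ℕ) : ℝ≥0∞) = 1 :=
    ENNReal.inv_mul_cancel (by exact_mod_cast Nat.succ_ne_zero p) (ENNReal.natCast_ne_top _)
  have c2 : (MM m p : ℝ≥0∞)⁻¹ ^ (1 / 2 : ℝ) * (MM m p : ℝ≥0∞) ^ (1 / 2 : ℝ) = 1 := by
    rw [← ENNReal.mul_rpow_of_nonneg _ _ (by norm_num), ENNReal.inv_mul_cancel hM0 hMt,
      ENNReal.one_rpow]
  unfold YY
  rw [lintegral_const_mul _ ((VV_meas hhm).pow_const _)]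
  calc _ ≤ (32 * Ck B) ^ (1 / 2 : ℝ) * (((p + 1 : ℕ) : ℝ≥0∞)⁻¹ * ((MM m p : ℝ≥0∞)⁻¹ ^ (1 / 2 : ℝ))) *
        ((4 * B) * ((p + 1 : ℕ) * (MM m p : ℝ≥0∞) ^ (1 / 2 : ℝ)) *
          (3 * B ^ 2 * ∫⁻ x, gg m f p x ∂μ)) := by
        gcongr
        refine (lintegral_sqrt_VV hμ hm hB (hh_dep hd p)).trans ?_
        gcongr
        exact lintegral_hh_le hμ hm hB hd p
    _ = (((p + 1 : ℕ) : ℝ≥0∞)⁻¹ * ((p + 1 : ℕ) : ℝ≥0∞)) *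
        ((MM m p : ℝ≥0∞)⁻¹ ^ (1 / 2 : ℝ) * (MM m p : ℝ≥0∞) ^ (1 / 2 : ℝ)) *
        ((32 * Ck B) ^ (1 / 2 : ℝ) * (4 * B) * (3 * B ^ 2) * ∫⁻ x, gg m f p x ∂μ) := by ring
    _ = _ := by rw [c1, c2, one_mul, one_mul]

theorem main_bound (hμ : ∀ (n : ℕ) (x : G m), μ (cyl m n x) = ((MM m n : ℝ≥0∞))⁻¹)
    (hm : ∀ n, 2 ≤ m n) {B : ℕ} (hB : ∀ n, m n ≤ B) (hf : IsMartingale m μ f) :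
    ∫⁻ x, (⨆ n : ℕ, ‖mFej m μ f n x‖ₑ / ENNReal.ofReal (Real.log (n + 1) ^ 2)) ^ (1 / 2 : ℝ) ∂μ
      ≤ (32 * Ck B) ^ (1 / 2 : ℝ) * (4 * B) * (3 * B ^ 2) * 2 *
        ∫⁻ x, (⨆ n : ℕ, ‖f n x‖ₑ) ^ (1 / 2 : ℝ) ∂μ := by
  have hd : ∀ n, Dep m n (f n) := fun n => dep_of_filt (hf.2.1 n)
  have hYm : ∀ p, Measurable (YY m μ B f p) := fun p =>
    ((VV_meas (hh_dep hd p).measurable).pow_const _).const_mul _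
  have h1 : ∀ x, (⨆ n : ℕ, ‖mFej m μ f n x‖ₑ / ENNReal.ofReal (Real.log (n + 1) ^ 2)) ^ (1 / 2 : ℝ)
      ≤ ∑' p, YY m μ B f p x := by
    intro x
    have h2 : (⨆ n : ℕ, ‖mFej m μ f n x‖ₑ / ENNReal.ofReal (Real.log (n + 1) ^ 2))
        ≤ (∑' p, YY m μ B f p x) ^ (2 : ℝ) := by
      apply iSup_le
      intro n
      have := ENNReal.rpow_le_rpow (fej_sqrt hμ hm hB hf n x) (show (0 : ℝ) ≤ 2 by norm_num)
      rw [← ENNReal.rpow_mul] at this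
      norm_num at this ⊢
      exact this
    have := ENNReal.rpow_le_rpow h2 (show (0 : ℝ) ≤ 1 / 2 by norm_num)
    rw [← ENNReal.rpow_mul (∑' p, YY m μ B f p x)] at this
    have e : (2 : ℝ) * (1 / 2) = 1 := by norm_num
    rw [e, ENNReal.rpow_one] at this
    exact this
  calc _ ≤ ∫⁻ x, ∑' p, YY m μ B f p x ∂μ := lintegral_mono h1
    _ = ∑' p, ∫⁻ x, YY m μ B f p x ∂μ := lintegral_tsum fun p => (hYm p).aemeasurable
    _ ≤ ∑' p, (32 * Ck B) ^ (1 / 2 : ℝ) * (4 * B) * (3 * B ^ 2) * ∫⁻ x, gg m f p x ∂μ :=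
        ENNReal.tsum_le_tsum fun p => lintegral_YY hμ hm hB hf p
    _ = (32 * Ck B) ^ (1 / 2 : ℝ) * (4 * B) * (3 * B ^ 2) * ∫⁻ x, ∑' p, gg m f p x ∂μ := by
        rw [ENNReal.tsum_mul_left, lintegral_tsum fun p => (gg_dep hd p).measurable.aemeasurable]
    _ ≤ (32 * Ck B) ^ (1 / 2 : ℝ) * (4 * B) * (3 * B ^ 2) *
        ∫⁻ x, 2 * (⨆ n : ℕ, ‖f n x‖ₑ) ^ (1 / 2 : ℝ) ∂μ := by
        gcongr with x
        rw [ENNReal.tsum_eq_iSup_nat]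
        exact iSup_le fun n => sum_gg_le n x
    _ = _ := by
        rw [lintegral_const_mul' _ _ (by norm_num)]
        ring

end

/-- There is an absolute constant `c` (depending only on `sup_n m_n`) such
that for every martingale `f ∈ H_{1/2}(G_m)`,
`‖ sup_n |σ_n f| / log^2(n+1) ‖_{1/2} ≤ c ‖f‖_{H_{1/2}}`, where `σ_n` is the `n`-th Fejér mean
of the Vilenkin-Fourier series. -/
theorem statement3
    (m : ℕ → ℕ) (hm : ∀ n, 2 ≤ m n) (hmb : ∃ B, ∀ n, m n ≤ B)
    (μ : Measure (G m)) [IsProbabilityMeasure μ]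
    (hμ : ∀ (n : ℕ) (x : G m), μ (cyl m n x) = ((MM m n : ℝ≥0∞))⁻¹) :
    ∃ c : ℝ≥0, ∀ f : ℕ → G m → ℂ, IsMartingale m μ f →
      HpNorm m μ (1 / 2) f < ⊤ →
      lpNormE m μ (1 / 2)
          (fun x => ⨆ n : ℕ, (‖mFej m μ f n x‖₊ : ℝ≥0∞) /
            ENNReal.ofReal (Real.log (n + 1) ^ 2)) ≤
        (c : ℝ≥0∞) * HpNorm m μ (1 / 2) f := by
  obtain ⟨B, hB⟩ := hmb
  haveI : ∀ n, NeZero (m n) := fun n => ⟨by have := hm n; omega⟩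
  set C : ℝ≥0∞ := (32 * Ck B) ^ (1 / 2 : ℝ) * (4 * B) * (3 * B ^ 2) * 2 with hC
  have hB' : (B : ℝ≥0∞) ≠ ⊤ := ENNReal.natCast_ne_top _
  have hCt : C ≠ ⊤ := by
    have h1 : (32 * Ck B) ^ (1 / 2 : ℝ) ≠ ⊤ :=
      ENNReal.rpow_ne_top_of_nonneg (by norm_num) (ENNReal.mul_ne_top (by norm_num) (Ck_ne_top B))
    exact ENNReal.mul_ne_top (ENNReal.mul_ne_top (ENNReal.mul_ne_top h1
      (ENNReal.mul_ne_top (by norm_num) hB')) (ENNReal.mul_ne_top (by norm_num)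
      (ENNReal.pow_ne_top hB'))) (by norm_num)
  have hC2 : C ^ (1 / (1 / 2) : ℝ) ≠ ⊤ := ENNReal.rpow_ne_top_of_nonneg (by norm_num) hCt
  refine ⟨(C ^ (1 / (1 / 2) : ℝ)).toNNReal, fun f hf _ => ?_⟩
  rw [ENNReal.coe_toNNReal hC2]
  unfold HpNorm lpNormE
  rw [← ENNReal.mul_rpow_of_nonneg _ _ (by norm_num)]
  exact ENNReal.rpow_le_rpow (main_bound hμ hm hB hf) (by norm_num)

end Vilenkin
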